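/- Assume that every planar 4-connected triangulation on m vertices admits a CDC of size at most m−2. Then every plane triangulation T satisfies c(T) ≤ 3·|𝒫_{K₄}(T)| + Σ_{G ∈ 𝒫₄(T)} (|V(G)| − 2), where 𝒫_{K₄}(T) and 𝒫₄(T) denote the sets of pieces of the decomposition tree of T isomorphic to K₄ and 4-connected, respectively. -/

import Mathlib

/-!
A cover is built along the decomposition tree. If `T` is split along a triangle `xyz` into two
triangulations with double covers `S` and `S'`, then these combine to a double cover of `T` with at
most `|S| + |S'|` cycles (`IsTriangleGluing.glue`), so it remains to cover the pieces.

Gluing. In `S + S'` the three triangle edges are covered four times and all others twice. Record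
for each cycle its trace on the three triangle edges. If one of the covers contains the triangle
`xyz` twice, drop both copies. Otherwise a finite check (`exists_traceMatching`) gives a matching
between cycles of `S` and cycles of `S'` such that matched cycles share a triangle edge and each
triangle edge is common to exactly one matched pair. Matched cycles meet only in `x`, `y`, `z`, so
their symmetric difference is a union of at most two edge-disjoint cycles (`exists_cycle_swap`);
replacing each matched pair by these cycles lowers the multiplicity of each triangle edge by two.

Pieces. A piece without separating triangle is `K₄`, which is doubly covered by its three
Hamiltonian cycles, or has at least five vertices. In the second case it is a `4`-connected
triangulation, and the assumed bound applies. That the parts of a split again have `3n - 6` edges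
follows by adding the bounds of `mader_bound` (a graph without `K₅` minor has at most `3n - 6`
edges) for both parts. The same bound, applied after contracting one side of a minimal separator
into a vertex of the separator, shows that a minimal separator with at most three vertices would be
a separating triangle (`isKConnected_four`).
-/

open SimpleGraph

attribute [local instance] Classical.propDecidable

/-- A cycle in a graph: a connected, 2-regular subgraph. -/
def IsCycleSubgraph {V : Type*} {G : SimpleGraph V} (C : G.Subgraph) : Prop :=
  C.coe.Connected ∧ ∀ v ∈ C.verts, (C.neighborSet v).ncard = 2

/-- A cycle double cover: a multiset of cycles covering every edge exactly twice
(counted with multiplicity). -/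
def IsCDC {V : Type*} (G : SimpleGraph V) (S : Multiset G.Subgraph) : Prop :=
  (∀ C ∈ S, IsCycleSubgraph C) ∧
  ∀ e ∈ G.edgeSet, S.countP (fun C => e ∈ C.edgeSet) = 2

/-- Graph minor relation (via branch sets). -/
def HasGraphMinor {V : Type*} {W : Type*} (G : SimpleGraph V) (H : SimpleGraph W) : Prop :=
  ∃ f : W → Set V,
    (∀ w, (f w).Nonempty) ∧
    (∀ w, (G.induce (f w)).Connected) ∧
    (Pairwise fun w₁ w₂ => Disjoint (f w₁) (f w₂)) ∧
    ∀ ⦃w₁ w₂⦄, H.Adj w₁ w₂ → ∃ v₁ ∈ f w₁, ∃ v₂ ∈ f w₂, G.Adj v₁ v₂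

/-- Planarity, via Wagner's theorem: no `K₅` minor and no `K_{3,3}` minor. -/
def IsPlanar {V : Type*} (G : SimpleGraph V) : Prop :=
  ¬ HasGraphMinor G (completeGraph (Fin 5)) ∧
  ¬ HasGraphMinor G (completeBipartiteGraph (Fin 3) (Fin 3))

/-- `k`-connectivity: more than `k` vertices, and removing fewer than `k`
vertices leaves a connected graph. -/
def IsKConnected {V : Type*} [Fintype V] (k : ℕ) (G : SimpleGraph V) : Prop :=
  k < Fintype.card V ∧ ∀ s : Set V, s.ncard < k → (G.induce sᶜ).Connected

/-- A Hamiltonian cycle: a cycle through all vertices. -/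
def IsHamCycle {V : Type*} (G : SimpleGraph V) (C : G.Subgraph) : Prop :=
  IsCycleSubgraph C ∧ C.verts = Set.univ
/-- A (plane) triangulation, combinatorially: a maximal planar graph, i.e. a planar graph
on `n ≥ 3` vertices with exactly `3n - 6` edges (equivalently, every face is a triangle). -/
def IsTriangulation {V : Type*} [Fintype V] (G : SimpleGraph V) : Prop :=
  IsPlanar G ∧ 3 ≤ Fintype.card V ∧ G.edgeSet.ncard + 6 = 3 * Fintype.card V

/-- A separating triangle: three pairwise adjacent vertices whose removal disconnects
the graph. -/
def HasSepTriangle {α : Type*} (H : SimpleGraph α) : Prop :=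
  ∃ u v w : α, H.Adj u v ∧ H.Adj v w ∧ H.Adj u w ∧
    ¬ (H.induce {x | x ≠ u ∧ x ≠ v ∧ x ≠ w}).Connected

/-- The minimum size of a cycle double cover of `G` (`⊤` if `G` has none). -/
noncomputable def cdcMin {V : Type*} (G : SimpleGraph V) : ℕ∞ :=
  sInf {n : ℕ∞ | ∃ S : Multiset G.Subgraph, IsCDC G S ∧ (Multiset.card S : ℕ∞) = n}

/-- `IsPieceDecomp T s P` : `P` is the multiset of (vertex sets of) pieces of the
decomposition of the triangulation `T.induce s` obtained by successively splitting along
separating triangles (retaining a copy of the separating triangle in each part), until no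
piece has a separating triangle. -/
inductive IsPieceDecomp {V : Type*} (T : SimpleGraph V) :
    Finset V → Multiset (Finset V) → Prop
  | base (s : Finset V) :
      ¬ HasSepTriangle (T.induce (s : Set V)) → IsPieceDecomp T s {s}
  | split (s a b : Finset V) (P Q : Multiset (Finset V)) :
      a ∪ b = s → a ≠ s → b ≠ s →
      (a ∩ b).card = 3 →
      (∀ u ∈ a ∩ b, ∀ v ∈ a ∩ b, u ≠ v → T.Adj u v) →
      (∀ u ∈ a, ∀ v ∈ b, T.Adj u v → u ∈ b ∨ v ∈ a) →
      IsPieceDecomp T a P → IsPieceDecomp T b Q →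
      IsPieceDecomp T s (P + Q)

/-! ### Connectedness and minors -/

/-- Connectedness of an induced subgraph, phrased with sets closed under adjacency. -/
lemma induce_connected_iff {V : Type*} {G : SimpleGraph V} {s : Set V} :
    (G.induce s).Connected ↔ s.Nonempty ∧ ∀ K ⊆ s, K.Nonempty →
      (∀ x ∈ K, ∀ y ∈ s, G.Adj x y → y ∈ K) → K = s := by
  constructor
  · intro h
    obtain ⟨⟨v, hv⟩⟩ := h.nonempty
    refine ⟨⟨v, hv⟩, fun K hKs ⟨x, hx⟩ hK => Set.Subset.antisymm hKs fun y hy => ?_⟩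
    obtain ⟨p⟩ := h.preconnected ⟨x, hKs hx⟩ ⟨y, hy⟩
    have key : ∀ (a b : s) (_ : (G.induce s).Walk a b), (a : V) ∈ K → (b : V) ∈ K := by
      intro a b p
      induction p with
      | nil => exact id
      | cons h _ ih => exact fun ha => ih (hK _ ha _ (Subtype.prop _) h)
    exact key _ _ p hx
  · rintro ⟨⟨v, hv⟩, h⟩
    rw [connected_iff_exists_forall_reachable]
    refine ⟨⟨v, hv⟩, ?_⟩
    have := h {x | ∃ hx : x ∈ s, (G.induce s).Reachable ⟨v, hv⟩ ⟨x, hx⟩}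
      (fun x hx => hx.1) ⟨v, hv, Reachable.rfl⟩ (by
        rintro x ⟨hx, hr⟩ y hy hxy
        refine ⟨hy, hr.trans (Adj.reachable ?_)⟩
        exact hxy)
    rintro ⟨y, hy⟩
    rw [← this] at hy
    exact hy.2

lemma induce_singleton_connected {V : Type*} (G : SimpleGraph V) (v : V) :
    (G.induce {v}).Connected := by
  rw [induce_connected_iff]
  refine ⟨⟨v, rfl⟩, fun K hK hn _ => ?_⟩
  exact (Set.Nonempty.subset_singleton_iff hn).1 hK

lemma HasGraphMinor.trans {U V W : Type*} {G : SimpleGraph U} {H : SimpleGraph V}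
    {K : SimpleGraph W} (h₁ : HasGraphMinor G H) (h₂ : HasGraphMinor H K) :
    HasGraphMinor G K := by
  obtain ⟨g, gn, gc, gd, ga⟩ := h₁
  obtain ⟨f, fn, fc, fd, fa⟩ := h₂
  refine ⟨fun w => ⋃ v ∈ f w, g v, fun w => ?_, fun w => ?_, fun w₁ w₂ hw => ?_,
    fun w₁ w₂ hw => ?_⟩
  · obtain ⟨v, hv⟩ := fn w
    obtain ⟨x, hx⟩ := gn v
    exact ⟨x, Set.mem_biUnion hv hx⟩
  · rw [induce_connected_iff]
    obtain ⟨v, hv⟩ := fn w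
    obtain ⟨x, hx⟩ := gn v
    refine ⟨⟨x, Set.mem_biUnion hv hx⟩, fun L hL hLn hLc => ?_⟩
    have hall : ∀ v ∈ f w, (g v ∩ L).Nonempty → g v ⊆ L := by
      intro v hv hne
      have := (induce_connected_iff.1 (gc v)).2 (g v ∩ L) Set.inter_subset_left hne
        (fun x hx y hy hxy => ⟨hy, hLc x hx.2 y (Set.mem_biUnion hv hy) hxy⟩)
      rw [← this]
      exact Set.inter_subset_right
    have key := (induce_connected_iff.1 (fc w)).2 {v | v ∈ f w ∧ g v ⊆ L} (fun v hv => hv.1)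
      (by
        obtain ⟨x, hx⟩ := hLn
        obtain ⟨v, hv, hxv⟩ := Set.mem_iUnion₂.1 (hL hx)
        exact ⟨v, hv, hall v hv ⟨x, hxv, hx⟩⟩)
      (by
        rintro a ⟨ha, hag⟩ b hb hab
        obtain ⟨x, hx, y, hy, hxy⟩ := ga hab
        exact ⟨hb, hall b hb ⟨y, hy, hLc x (hag hx) y (Set.mem_biUnion hb hy) hxy⟩⟩)
    refine Set.Subset.antisymm hL fun y hy => ?_
    obtain ⟨v, hv, hyv⟩ := Set.mem_iUnion₂.1 hy
    rw [← key] at hv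
    exact hv.2 hyv
  · refine Set.disjoint_left.2 fun x hx hx' => ?_
    obtain ⟨v, hv, hxv⟩ := Set.mem_iUnion₂.1 hx
    obtain ⟨v', hv', hxv'⟩ := Set.mem_iUnion₂.1 hx'
    have hne : v ≠ v' := by
      rintro rfl
      exact Set.disjoint_left.1 (fd hw) hv hv'
    exact Set.disjoint_left.1 (gd hne) hxv hxv'
  · obtain ⟨v₁, hv₁, v₂, hv₂, hv⟩ := fa hw
    obtain ⟨x, hx, y, hy, hxy⟩ := ga hv
    exact ⟨x, Set.mem_biUnion hv₁ hx, y, Set.mem_biUnion hv₂ hy, hxy⟩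

/-- A graph is a minor of every graph it maps into injectively. -/
lemma HasGraphMinor.of_injective {U V : Type*} {G : SimpleGraph U} {H : SimpleGraph V}
    (f : V → U) (hf : Function.Injective f) (hadj : ∀ a b, H.Adj a b → G.Adj (f a) (f b)) :
    HasGraphMinor G H := by
  refine ⟨fun v => {f v}, fun v => ⟨_, rfl⟩, fun v => induce_singleton_connected _ _,
    fun a b hab => ?_, fun a b hab => ⟨_, rfl, _, rfl, hadj a b hab⟩⟩
  simpa using hf.ne hab

/-- No `K₅` minor: the only part of planarity used for counting edges. -/
def NoK5 {V : Type*} (G : SimpleGraph V) : Prop :=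
  ¬ HasGraphMinor G (completeGraph (Fin 5))

lemma NoK5.of_minor {U V : Type*} {G : SimpleGraph U} {H : SimpleGraph V} (hG : NoK5 G)
    (h : HasGraphMinor G H) : NoK5 H := fun h' => hG (h.trans h')

lemma IsPlanar.of_minor {U V : Type*} {G : SimpleGraph U} {H : SimpleGraph V} (hG : IsPlanar G)
    (h : HasGraphMinor G H) : IsPlanar H :=
  ⟨fun h' => hG.1 (h.trans h'), fun h' => hG.2 (h.trans h')⟩

lemma hasGraphMinor_induce {V : Type*} (G : SimpleGraph V) (A : Set V) :
    HasGraphMinor G (G.induce A) :=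
  .of_injective Subtype.val Subtype.val_injective fun _ _ h => h

/-- The star with centre `w` and leaves `S \ {w}`. -/
def starGraphOn {V : Type*} (w : V) (S : Set V) : SimpleGraph V where
  Adj x y := x ≠ y ∧ (x = w ∧ y ∈ S ∨ y = w ∧ x ∈ S)
  symm := ⟨fun _ _ h => ⟨h.1.symm, h.2.symm⟩⟩
  loopless := ⟨fun _ h => h.1 rfl⟩

/-- Contracting a connected set `K` outside `A` into a neighbour `w` of `K` joins `w` to every
other vertex of a set `S` of neighbours of `K`. -/
lemma hasGraphMinor_star {V : Type*} (G : SimpleGraph V) {A K S : Set V} {w : V}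
    (hAK : Disjoint A K) (hK : (G.induce K).Connected) (hw : ∃ k ∈ K, G.Adj w k)
    (hS : ∀ y ∈ S, ∃ k ∈ K, G.Adj y k) :
    HasGraphMinor G ((G ⊔ starGraphOn w S).induce A) := by
  obtain ⟨k, hk, hwk⟩ := hw
  refine ⟨fun x => if (x : V) = w then {(x : V)} ∪ K else {(x : V)}, fun x => ⟨x, ?_⟩,
    fun x => ?_, fun x y hxy => ?_, fun x y hxy => ?_⟩
  · dsimp only
    split_ifs <;> simp
  · by_cases h : (x : V) = w
    · dsimp only
      rw [if_pos h]
      exact connected_induce_union (induce_singleton_connected G _).preconnected hK.preconnected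
        (v := (x : V)) (w := k) rfl hk (h ▸ hwk)
    · dsimp only
      rw [if_neg h]
      exact induce_singleton_connected G _
  · have hne : (x : V) ≠ y := fun h => hxy (Subtype.ext h)
    have hxK := Set.disjoint_left.1 hAK x.2
    have hyK := Set.disjoint_left.1 hAK y.2
    dsimp only
    rw [Set.disjoint_left]
    intro z
    split_ifs <;> grind
  · have hm : ∀ z : A, (z : V) ∈ (if (z : V) = w then {(z : V)} ∪ K else {(z : V)} : Set V) := by
      intro z; split_ifs <;> simp
    have hmK : ∀ z : A, (z : V) = w → ∀ k ∈ K,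
        k ∈ (if (z : V) = w then {(z : V)} ∪ K else {(z : V)} : Set V) := by
      intro z hz k hk; rw [if_pos hz]; exact Or.inr hk
    rcases hxy with hxy | ⟨-, ⟨hx, hy⟩ | ⟨hy, hx⟩⟩
    · exact ⟨x, hm x, y, hm y, hxy⟩
    · obtain ⟨k', hk', h'⟩ := hS _ hy
      exact ⟨k', hmK x hx k' hk', y, hm y, h'.symm⟩
    · obtain ⟨k', hk', h'⟩ := hS _ hx
      exact ⟨x, hm x, k', hmK y hy k' hk', h'⟩

/-! ### Counting edges -/

/-- The number of edges of `G` with both ends in `A`. -/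
noncomputable def ec {V : Type*} (G : SimpleGraph V) (A : Set V) : ℕ :=
  {e ∈ G.edgeSet | ∀ x ∈ e, x ∈ A}.ncard

lemma ec_univ {V : Type*} (G : SimpleGraph V) : ec G Set.univ = G.edgeSet.ncard := by
  simp [ec]

lemma edgeSet_induce_ncard {V : Type*} (G : SimpleGraph V) (A : Set V) :
    (G.induce A).edgeSet.ncard = ec G A := by
  rw [ec, ← Set.ncard_image_of_injective _ (Sym2.map.injective (Subtype.val_injective (p := (· ∈ A))))]
  congr 1
  ext e
  induction e using Sym2.ind with
  | _ x y =>
    constructor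
    · rintro ⟨e, he, hxy⟩
      induction e using Sym2.ind with
      | _ a b =>
        rw [Sym2.map_mk] at hxy
        rw [← hxy]
        refine ⟨he, ?_⟩
        simp
    · rintro ⟨h, hA⟩
      refine ⟨s(⟨x, hA x (by simp)⟩, ⟨y, hA y (by simp)⟩), ?_, rfl⟩
      simpa using h

/-- Completing the star from `w` to `S` adds one edge for every vertex of `S` missed by `w`. -/
lemma ec_star {V : Type*} [Finite V] (G : SimpleGraph V) {A S : Set V} {w : V} (hw : w ∈ A)
    (hS : S ⊆ A) :
    ec G A + {y ∈ S | y ≠ w ∧ ¬ G.Adj w y}.ncard ≤ ec (G ⊔ starGraphOn w S) A := by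
  have hinj : Function.Injective (fun y => s(w, y)) := fun a b h => Sym2.congr_right.1 h
  rw [ec, ec, ← Set.ncard_image_of_injective {y ∈ S | y ≠ w ∧ ¬ G.Adj w y} hinj,
    ← Set.ncard_union_eq _ (Set.toFinite _) (Set.toFinite _)]
  · refine Set.ncard_le_ncard ?_ (Set.toFinite _)
    rintro e (⟨he, heA⟩ | ⟨y, ⟨hyS, hyw, hy⟩, rfl⟩)
    · exact ⟨edgeSet_mono le_sup_left he, heA⟩
    · refine ⟨Or.inr ⟨hyw.symm, Or.inl ⟨rfl, hyS⟩⟩, ?_⟩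
      intro x hx
      rcases Sym2.mem_iff.1 hx with rfl | rfl
      exacts [hw, hS hyS]
  · rw [Set.disjoint_left]
    rintro e he ⟨y, ⟨-, -, hy⟩, rfl⟩
    exact hy he.1

lemma ec_union {V : Type*} [Finite V] (G : SimpleGraph V) {A B : Set V}
    (h : ∀ u ∈ A, ∀ v ∈ B, G.Adj u v → u ∈ B ∨ v ∈ A) :
    ec G (A ∪ B) + ec G (A ∩ B) = ec G A + ec G B := by
  rw [ec, ec, ec, ec, ← Set.ncard_union_add_ncard_inter {e ∈ G.edgeSet | ∀ x ∈ e, x ∈ A}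
    {e ∈ G.edgeSet | ∀ x ∈ e, x ∈ B} (Set.toFinite _) (Set.toFinite _)]
  congr 2
  · ext e
    induction e using Sym2.ind with
    | _ x y =>
      have := h x
      have := h y
      simp only [Set.mem_ofPred_eq, Set.mem_union, Sym2.mem_iff, mem_edgeSet]
      have := G.adj_comm x y
      grind
  · ext e
    simp only [Set.mem_ofPred_eq, Set.mem_inter_iff]
    grind

lemma ec_compl_singleton {V : Type*} [Finite V] (G : SimpleGraph V) (v : V) :
    G.edgeSet.ncard = ec G {v}ᶜ + (G.neighborSet v).ncard := by
  have hinj : Function.Injective (fun y => s(v, y)) := fun a b h => Sym2.congr_right.1 h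
  rw [ec, ← Set.ncard_image_of_injective (G.neighborSet v) hinj,
    ← Set.ncard_union_eq _ (Set.toFinite _) (Set.toFinite _)]
  · congr 1
    ext e
    induction e using Sym2.ind with
    | _ x y =>
      have := G.adj_comm x y
      simp only [Set.mem_ofPred_eq, Set.mem_union, Sym2.mem_iff, mem_edgeSet, Set.mem_image,
        mem_neighborSet, Set.mem_compl_iff, Set.mem_singleton_iff, Sym2.eq_iff]
      grind
  · rw [Set.disjoint_left]
    rintro e he ⟨y, -, rfl⟩
    exact he.2 v (by simp) rfl

/-! ### Mader's bound for graphs without a `K₅` minor -/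

lemma hasK5_of_branch {V : Type*} {G : SimpleGraph V} (f : Fin 5 → Set V)
    (hc : ∀ i, (G.induce (f i)).Connected) (hd : ∀ i j, i < j → Disjoint (f i) (f j))
    (ha : ∀ i j, i < j → ∃ x ∈ f i, ∃ y ∈ f j, G.Adj x y) : ¬ NoK5 G := by
  refine fun h => h ⟨f, fun i => (induce_connected_iff.1 (hc i)).1, hc, fun i j hij => ?_,
    fun i j hij => ?_⟩
  · rcases lt_or_gt_of_ne hij with h | h
    exacts [hd i j h, (hd j i h).symm]
  · rcases lt_or_gt_of_ne hij.ne with h | h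
    · exact ha i j h
    · obtain ⟨x, hx, y, hy, hxy⟩ := ha j i h
      exact ⟨y, hy, x, hx, hxy.symm⟩

/-- Contracting `a₁b₁` turns `v`, `a₁b₁`, `a₂`, `b₂`, `c` into a `K₅`. -/
lemma hasK5_of_wheel {V : Type*} {G : SimpleGraph V} {v a₁ a₂ b₁ b₂ c : V}
    (hv : ∀ x ∈ ({a₁, a₂, b₁, b₂, c} : Set V), G.Adj v x)
    (hd : [a₁, a₂, b₁, b₂, c].Nodup)
    (h₁ : G.Adj a₁ b₁) (h₂ : G.Adj a₁ b₂) (h₃ : G.Adj a₁ c) (h₄ : G.Adj a₂ b₁)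
    (h₅ : G.Adj a₂ b₂) (h₆ : G.Adj a₂ c) (h₇ : G.Adj b₂ c) : ¬ NoK5 G := by
  have hva₁ := hv a₁ (by simp)
  have hva₂ := hv a₂ (by simp)
  have hvb₁ := hv b₁ (by simp)
  have hvb₂ := hv b₂ (by simp)
  have hvc := hv c (by simp)
  have := hva₁.ne; have := hva₂.ne; have := hvb₁.ne; have := hvb₂.ne; have := hvc.ne
  have := h₄.symm
  simp only [List.nodup_cons, List.mem_cons, List.not_mem_nil] at hd
  refine hasK5_of_branch ![{v}, {a₁, b₁}, {a₂}, {b₂}, {c}] ?_ ?_ ?_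
  · intro i
    fin_cases i
    · exact induce_singleton_connected _ _
    · exact induce_pair_connected_of_adj h₁
    all_goals exact induce_singleton_connected _ _
  · intro i j hij
    fin_cases i <;> fin_cases j <;> simp at hij ⊢ <;> grind
  · intro i j hij
    fin_cases i <;> fin_cases j <;> simp at hij ⊢ <;> tauto

lemma hasK5_of_clique {V : Type*} {G : SimpleGraph V} (s : Finset V) (hs : s.card = 5)
    (h : ∀ x ∈ s, ∀ y ∈ s, x ≠ y → G.Adj x y) : ¬ NoK5 G := by
  have e := (s.equivFinOfCardEq hs).symm
  refine fun hG => hG (.of_injective (fun i => (e i : V)) ?_ ?_)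
  · exact Subtype.val_injective.comp e.injective
  · intro i j hij
    exact h _ (e i).2 _ (e j).2 fun h' => hij.ne (e.injective (Subtype.ext h'))

/-- If each neighbour of `v` has at least three neighbours in `N(v)` and `v` has four or five
neighbours, then `G` has a `K₅` minor. -/
lemma hasK5_of_local {V : Type*} {G : SimpleGraph V} (v : V) (N : Finset V)
    (hN : ∀ x, x ∈ N ↔ G.Adj v x) (h5 : N.card ≤ 5) (h4 : N.Nonempty)
    (h : ∀ u ∈ N, 3 ≤ (N.filter (G.Adj u)).card) : ¬ NoK5 G := by
  have hsub : ∀ u ∈ N, N.filter (G.Adj u) ⊆ N.erase u := by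
    intro u _ y hy
    rw [Finset.mem_filter] at hy
    exact Finset.mem_erase.2 ⟨hy.2.ne', hy.1⟩
  have hge : 4 ≤ N.card := by
    obtain ⟨u, hu⟩ := h4
    have := Finset.card_le_card (hsub u hu)
    have := h u hu
    rw [Finset.card_erase_of_mem hu] at *
    omega
  have hvN : v ∉ N := fun h => G.irrefl ((hN v).1 h)
  rcases (show N.card = 4 ∨ N.card = 5 by omega) with hc | hc
  · -- `N(v)` is a clique
    have hadj : ∀ u ∈ N, ∀ w ∈ N, u ≠ w → G.Adj u w := by
      intro u hu w hw huw
      have heq := Finset.eq_of_subset_of_card_le (hsub u hu)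
        (by rw [Finset.card_erase_of_mem hu]; have := h u hu; omega)
      have : w ∈ N.filter (G.Adj u) := by rw [heq]; exact Finset.mem_erase.2 ⟨huw.symm, hw⟩
      exact (Finset.mem_filter.1 this).2
    refine hasK5_of_clique (insert v N) (by rw [Finset.card_insert_of_notMem hvN, hc]) ?_
    intro x hx y hy hxy
    rcases Finset.mem_insert.1 hx with rfl | hx' <;> rcases Finset.mem_insert.1 hy with rfl | hy'
    · exact absurd rfl hxy
    · exact (hN y).1 hy'
    · exact ((hN x).1 hx').symm
    · exact hadj x hx' y hy' hxy
  · -- each vertex of `N(v)` misses at most one other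
    have hmiss : ∀ u ∈ N, ∀ x ∈ N, ∀ y ∈ N, u ≠ x → u ≠ y → x ≠ y → G.Adj u x ∨ G.Adj u y := by
      intro u hu x hx y hy hux huy hxy
      by_contra! hcon
      have hsub' : N.filter (G.Adj u) ⊆ ((N.erase u).erase x).erase y := by
        intro z hz
        have hz' := Finset.mem_filter.1 hz
        refine Finset.mem_erase.2 ⟨?_, Finset.mem_erase.2 ⟨?_, hsub u hu hz⟩⟩
        · rintro rfl; exact hcon.2 hz'.2
        · rintro rfl; exact hcon.1 hz'.2
      have := Finset.card_le_card hsub'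
      rw [Finset.card_erase_of_mem (by simp; grind), Finset.card_erase_of_mem (by simp; grind),
        Finset.card_erase_of_mem hu] at this
      have := h u hu
      omega
    by_cases hcl : ∀ x ∈ N, ∀ y ∈ N, x ≠ y → G.Adj x y
    · exact hasK5_of_clique N hc hcl
    · push Not at hcl
      obtain ⟨a₁, ha₁, a₂, ha₂, hne, hna⟩ := hcl
      have hc3 : ((N.erase a₁).erase a₂).card = 3 := by
        rw [Finset.card_erase_of_mem (by simp; grind), Finset.card_erase_of_mem ha₁]
        omega
      obtain ⟨x, y, z, hxy, hxz, hyz, hs⟩ := Finset.card_eq_three.1 hc3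
      have hmem : ∀ t, t ∈ ({x, y, z} : Finset V) → t ≠ a₂ ∧ t ≠ a₁ ∧ t ∈ N := by
        intro t ht
        rw [← hs] at ht
        simpa using ht
      have hx := hmem x (by simp)
      have hy := hmem y (by simp)
      have hz := hmem z (by simp)
      have hna' : ¬ G.Adj a₂ a₁ := fun h => hna h.symm
      have h1 : ∀ t, t ≠ a₂ ∧ t ≠ a₁ ∧ t ∈ N → G.Adj a₁ t ∧ G.Adj a₂ t := by
        rintro t ⟨ht2, ht1, htN⟩
        have := hmiss a₁ ha₁ a₂ ha₂ t htN hne ht1.symm ht2.symm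
        have := hmiss a₂ ha₂ a₁ ha₁ t htN hne.symm ht2.symm ht1.symm
        tauto
      have main : ∀ b₁ b₂ c, b₁ ≠ a₂ ∧ b₁ ≠ a₁ ∧ b₁ ∈ N → b₂ ≠ a₂ ∧ b₂ ≠ a₁ ∧ b₂ ∈ N →
          c ≠ a₂ ∧ c ≠ a₁ ∧ c ∈ N → b₁ ≠ b₂ → b₁ ≠ c → G.Adj b₂ c → ¬ NoK5 G := by
        intro b₁ b₂ c hb₁ hb₂ hc' hbb hbc hadj
        have := hadj.ne
        refine hasK5_of_wheel (v := v) (a₁ := a₁) (a₂ := a₂) (b₁ := b₁) (b₂ := b₂) (c := c)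
          ?_ ?_ (h1 _ hb₁).1 (h1 _ hb₂).1 (h1 _ hc').1 (h1 _ hb₁).2 (h1 _ hb₂).2 (h1 _ hc').2 hadj
        · simp only [← hN]
          rintro t (rfl | rfl | rfl | rfl | rfl)
          exacts [ha₁, ha₂, hb₁.2.2, hb₂.2.2, hc'.2.2]
        · simp only [List.nodup_cons, List.mem_cons, List.not_mem_nil]
          grind
      rcases hmiss x hx.2.2 y hy.2.2 z hz.2.2 hxy hxz hyz with h | h
      · exact main z x y hz hx hy hxz.symm hyz.symm h
      · exact main y x z hy hx hz hxy.symm hyz h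

/-- Mader's bound: a graph on `n ≥ 3` vertices without `K₅` minor has at most `3n - 6` edges.
In a minimal counterexample every edge lies in three triangles, since otherwise it could be
contracted; a vertex of degree at most five then yields the minor. -/
theorem mader_bound.{u} (n : ℕ) : ∀ (V : Type u) [Fintype V] (G : SimpleGraph V),
    Fintype.card V = n → 3 ≤ n → NoK5 G → G.edgeSet.ncard + 6 ≤ 3 * n := by
  induction n with
  | zero => intros; omega
  | succ n ih =>
  intro V _ G hV hn hG
  rcases Nat.lt_or_ge n 4 with hn4 | hn4
  · -- at most `n choose 2` edges
    have h1 : G.edgeSet.ncard ≤ (n + 1).choose 2 := by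
      rw [← hV, ← coe_edgeFinset, Set.ncard_coe_finset]
      exact card_edgeFinset_le_card_choose_two
    have : n = 2 ∨ n = 3 := by omega
    rcases this with rfl | rfl
    · have : (2 + 1).choose 2 = 3 := rfl
      omega
    · have : (3 + 1).choose 2 = 6 := rfl
      omega
  · by_contra! hlt
    -- pass to a spanning subgraph with exactly `3(n+1) - 5` edges
    obtain ⟨E, hE, hEc⟩ := Set.exists_subset_card_eq (s := G.edgeSet) (n := 3 * (n + 1) - 5)
      (by omega)
    obtain ⟨H, hHG, hHc⟩ : ∃ H : SimpleGraph V, H ≤ G ∧ H.edgeSet.ncard + 5 = 3 * (n + 1) := by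
      refine ⟨fromEdgeSet E, ?_, ?_⟩
      · rw [← G.fromEdgeSet_edgeSet]
        exact fromEdgeSet_mono hE
      · rw [edgeSet_fromEdgeSet, sdiff_eq_left.2 ?_, hEc]
        · omega
        · rw [Set.disjoint_left]
          exact fun e he he' => G.not_isDiag_of_mem_edgeSet (hE he) he'
    have hH : NoK5 H := hG.of_minor (.of_injective id Function.injective_id fun _ _ h => hHG h)
    -- a vertex of degree at most five
    obtain ⟨v, hv⟩ : ∃ v, H.degree v ≤ 5 := by
      by_contra! hcon
      have h1 := H.sum_degrees_eq_twice_card_edges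
      have h2 : H.edgeFinset.card = H.edgeSet.ncard := by
        rw [← coe_edgeFinset, Set.ncard_coe_finset]
      have h3 : ∑ v : V, 6 ≤ ∑ v, H.degree v := Finset.sum_le_sum fun v _ => hcon v
      simp only [Finset.sum_const, Finset.card_univ, smul_eq_mul, hV] at h3
      omega
    have hdeg : (H.neighborSet v).ncard = H.degree v := by
      rw [← card_neighborSet_eq_degree, ← Nat.card_eq_fintype_card, Nat.card_coe_set_eq]
    have hcompl : Fintype.card ({v}ᶜ : Set V) = n := by
      rw [Fintype.card_compl_set, hV]; simp
    have hdel := ec_compl_singleton H v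
    -- deleting `v`
    have hdeg4 : 4 ≤ H.degree v := by
      have := ih ({v}ᶜ : Set V) (H.induce {v}ᶜ) hcompl (by omega)
        (hH.of_minor (hasGraphMinor_induce _ _))
      rw [edgeSet_induce_ncard] at this
      omega
    refine hasK5_of_local (G := H) v (H.neighborFinset v) (by simp) (by simpa using hv) ?_ ?_ hH
    · rw [← Finset.card_pos, card_neighborFinset_eq_degree]; omega
    · intro u hu
      rw [mem_neighborFinset] at hu
      -- contracting `vu`
      have hmin := hasGraphMinor_star H (A := {v}ᶜ) (K := {v}) (S := H.neighborSet v) (w := u)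
        disjoint_compl_left (induce_singleton_connected _ _) ⟨v, rfl, hu.symm⟩
        (fun y hy => ⟨v, rfl, H.adj_symm hy⟩)
      have := ih _ _ hcompl (by omega) (hH.of_minor hmin)
      rw [edgeSet_induce_ncard] at this
      have hst := ec_star H (A := {v}ᶜ) (S := H.neighborSet v) (w := u) hu.ne'
        (fun y hy => (H.ne_of_adj hy).symm)
      have hcount : (H.neighborSet v).ncard =
          ((H.neighborFinset v).filter (H.Adj u)).card + 1 +
            {y ∈ H.neighborSet v | y ≠ u ∧ ¬ H.Adj u y}.ncard := by
        rw [← Set.ncard_coe_finset, ← Set.ncard_singleton u,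
          ← Set.ncard_union_eq _ (Set.toFinite _) (Set.toFinite _),
          ← Set.ncard_union_eq _ (Set.toFinite _) (Set.toFinite _)]
        · congr 1
          ext y
          simp only [mem_neighborSet, Finset.coe_filter, mem_neighborFinset, Set.mem_union,
            Set.mem_ofPred_eq, Set.mem_singleton_iff]
          grind
        · rw [Set.disjoint_left]
          intro y hy
          have := H.irrefl (v := u)
          simp at hy ⊢
          grind
        · rw [Set.disjoint_left]
          intro y hy
          have := H.irrefl (v := u)
          simp at hy ⊢
          grind
      omega

lemma NoK5.ec_bound {V : Type*} [Finite V] {G : SimpleGraph V} {A : Set V}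
    (h : NoK5 (G.induce A)) (hA : 3 ≤ A.ncard) : ec G A + 6 ≤ 3 * A.ncard := by
  have : Fintype A := Fintype.ofFinite _
  rw [← edgeSet_induce_ncard]
  refine mader_bound _ A _ ?_ hA h
  rw [← Nat.card_eq_fintype_card, Nat.card_coe_set_eq]

/-! ### Triangulations without separating triangles -/

lemma ec_le_choose {V : Type*} [Finite V] (G : SimpleGraph V) (A : Set V) :
    ec G A ≤ A.ncard.choose 2 := by
  have : Fintype V := Fintype.ofFinite V
  have : Fintype A := Fintype.ofFinite _
  rw [← edgeSet_induce_ncard, ← coe_edgeFinset, Set.ncard_coe_finset, ← Nat.card_coe_set_eq,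
    Nat.card_eq_fintype_card]
  exact card_edgeFinset_le_card_choose_two

lemma le_ec_pair {V : Type*} [Finite V] (G : SimpleGraph V) {u v : V} (h : G.Adj u v) :
    1 ≤ ec G {u, v} := by
  rw [ec, Nat.one_le_iff_ne_zero, ← Nat.pos_iff_ne_zero, Set.ncard_pos (Set.toFinite _)]
  exact ⟨s(u, v), h, by simp⟩

lemma le_ec_triple {V : Type*} [Finite V] (G : SimpleGraph V) {u v w : V} (huv : u ≠ v)
    (hvw : v ≠ w) (huw : u ≠ w) :
    (if G.Adj u v then 1 else 0) + ((if G.Adj v w then 1 else 0) + (if G.Adj u w then 1 else 0))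
      ≤ ec G {u, v, w} := by
  have h : (({s(u, v), s(v, w), s(u, w)} : Finset (Sym2 V)).filter (· ∈ G.edgeSet)).card =
      (if G.Adj u v then 1 else 0) + ((if G.Adj v w then 1 else 0) +
        (if G.Adj u w then 1 else 0)) := by
    rw [Finset.card_filter, Finset.sum_insert, Finset.sum_insert, Finset.sum_singleton]
    · simp only [mem_edgeSet]
    · simp; grind
    · simp; grind
  rw [← h, ← Set.ncard_coe_finset, ec]
  refine Set.ncard_le_ncard ?_ (Set.toFinite _)
  intro e he
  simp only [Finset.coe_filter, Finset.mem_insert, Finset.mem_singleton, Set.mem_ofPred_eq] at he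
  refine ⟨he.2, ?_⟩
  rcases he.1 with rfl | rfl | rfl <;> simp

lemma le_missing {V : Type*} [Finite V] (G : SimpleGraph V) {S : Set V} {u v w : V}
    (hu : u ∈ S) (hv : v ∈ S) (huv : u ≠ v) (hvw : v ≠ w) (huw : u ≠ w) :
    (if G.Adj w u then 0 else 1) + (if G.Adj w v then 0 else 1)
      ≤ {y ∈ S | y ≠ w ∧ ¬ G.Adj w y}.ncard := by
  have h : (({u, v} : Finset V).filter (fun y => ¬ G.Adj w y)).card =
      (if G.Adj w u then 0 else 1) + (if G.Adj w v then 0 else 1) := by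
    rw [Finset.card_filter, Finset.sum_insert (by simpa using huv), Finset.sum_singleton]
    simp only [ite_not]
  rw [← h, ← Set.ncard_coe_finset]
  refine Set.ncard_le_ncard ?_ (Set.toFinite _)
  intro e he
  simp only [Finset.coe_filter, Finset.mem_insert, Finset.mem_singleton, Set.mem_ofPred_eq] at he
  rcases he with ⟨rfl | rfl, he⟩
  exacts [⟨hu, huw, he⟩, ⟨hv, hvw, he⟩]

/-- Every nonempty set that is closed under adjacency in `G[s]` contains a component. -/
lemma exists_component {V : Type*} [Finite V] (G : SimpleGraph V) {s K : Set V}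
    (hKn : K.Nonempty) (hK : ∀ x ∈ K, ∀ y ∈ s, G.Adj x y → y ∈ K) :
    ∃ L ⊆ K, L.Nonempty ∧ (∀ x ∈ L, ∀ y ∈ s, G.Adj x y → y ∈ L) ∧ (G.induce L).Connected := by
  obtain ⟨L, hL⟩ := exists_minimal_of_wellFoundedLT
    (fun L : Set V => L ⊆ K ∧ L.Nonempty ∧ ∀ x ∈ L, ∀ y ∈ s, G.Adj x y → y ∈ L)
    ⟨K, subset_rfl, hKn, hK⟩
  refine ⟨L, hL.prop.1, hL.prop.2.1, hL.prop.2.2, induce_connected_iff.2 ⟨hL.prop.2.1, ?_⟩⟩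
  intro M hML hMn hM
  refine Set.Subset.antisymm hML (hL.le_of_le ⟨hML.trans hL.prop.1, hMn, ?_⟩ hML)
  intro x hx y hy hxy
  exact hM x hx y (hL.prop.2.2 x (hML hx) y hy hxy) hxy

/-- A graph on `n ≥ 5` vertices with `3n - 6` edges, without `K₅` minor and without separating
triangle, is `4`-connected. For a minimal separator `S` with sides `A` and `B`, contracting one side into a
vertex of `S` completes a star in the other side; counting edges on both sides rules out every
`S` with at most three vertices other than a triangle. -/
theorem isKConnected_four {V : Type*} [Fintype V] (G : SimpleGraph V) (hG : NoK5 G)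
    (hn : 5 ≤ Fintype.card V) (he : G.edgeSet.ncard + 6 = 3 * Fintype.card V)
    (hsep : ¬ HasSepTriangle G) : IsKConnected 4 G := by
  refine ⟨hn, fun S hS => ?_⟩
  induction hk : S.ncard using Nat.strong_induction_on generalizing S with
  | _ k ih =>
  subst hk
  have hSc := Set.ncard_add_ncard_compl S
  rw [Nat.card_eq_fintype_card] at hSc
  by_contra hcon
  rw [induce_connected_iff] at hcon
  push Not at hcon
  obtain ⟨K₀, hK₀s, hK₀n, hK₀c, hK₀ne⟩ := hcon
    ((Set.ncard_pos (Set.toFinite _)).1 (by omega))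
  obtain ⟨K, hKK₀, hKn, hKc, hKconn⟩ := exists_component G hK₀n hK₀c
  have hKs : K ⊆ Sᶜ := hKK₀.trans hK₀s
  have hKne : K ≠ Sᶜ := by
    rintro rfl
    exact hK₀ne (hK₀s.antisymm hKK₀)
  obtain ⟨L, hLK, hLn, hLc, hLconn⟩ := exists_component G (s := Sᶜ) (K := Sᶜ \ K)
    (Set.nonempty_of_ssubset (hKs.ssubset_of_ne hKne))
    (fun x hx y hy hxy => ⟨hy, fun hyK => hx.2 (hKc y hyK x hx.1 hxy.symm)⟩)
  have hLs : L ⊆ Sᶜ := hLK.trans Set.sdiff_subset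
  have hLKd : Disjoint L K := Set.disjoint_left.2 fun x hx => (hLK hx).2
  -- by minimality of `S`, every vertex of `S` has neighbours in every component
  have hattach : ∀ M ⊆ Sᶜ, M.Nonempty → (∀ x ∈ M, ∀ y ∈ Sᶜ, G.Adj x y → y ∈ M) →
      ∀ s ∈ S, ∃ k ∈ M, G.Adj s k := by
    intro M hM hMn hMc s hs
    by_contra! hno
    have hlt : (S \ {s}).ncard < S.ncard := Set.ncard_sdiff_singleton_lt_of_mem hs (Set.toFinite _)
    have hconn := ih _ hlt (S \ {s}) (by omega) rfl
    have hsub : Sᶜ ⊆ (S \ {s})ᶜ := Set.compl_subset_compl.2 Set.sdiff_subset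
    have := (induce_connected_iff.1 hconn).2 M (hM.trans hsub) hMn (by
      intro x hx y hy hxy
      by_cases hys : y = s
      · subst hys
        exact absurd hxy.symm (hno x hx)
      · exact hMc x hx y (fun hyS => hy ⟨hyS, hys⟩) hxy)
    have hsM : s ∈ M := by rw [this]; simp
    exact hM hsM hs
  have hattK := hattach K hKs hKn hKc
  have hattL := hattach L hLs hLn hLc
  have hA : S ⊆ Kᶜ := fun x hx hxK => hKs hxK hx
  have hsum := ec_union G (A := Kᶜ) (B := S ∪ K) (by
    intro u hu v hv huv
    by_contra! hcon
    rcases hv with hv | hv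
    · exact hcon.2 (hA hv)
    · exact hcon.1 (Or.inr (hKc v hv u (fun h => hcon.1 (Or.inl h)) huv.symm)))
  have hun : Kᶜ ∪ (S ∪ K) = Set.univ := by
    ext x; simp; tauto
  have hin : Kᶜ ∩ (S ∪ K) = S := by
    ext x
    have := @hA x
    simp at this ⊢; tauto
  rw [hun, hin, ec_univ] at hsum
  have hcK := Set.ncard_add_ncard_compl K
  rw [Nat.card_eq_fintype_card] at hcK
  have hcB : (S ∪ K).ncard = S.ncard + K.ncard :=
    Set.ncard_union_eq (Set.disjoint_left.2 fun x hx hxK => hKs hxK hx)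
      (Set.toFinite _) (Set.toFinite _)
  have hcA : S.ncard + L.ncard ≤ (Kᶜ : Set V).ncard := by
    rw [← Set.ncard_union_eq (Set.disjoint_left.2 fun x hx hxK => hLs hxK hx)
      (Set.toFinite _) (Set.toFinite _)]
    exact Set.ncard_le_ncard (Set.union_subset hA fun x hx => (hLK hx).2) (Set.toFinite _)
  have hK1 : 0 < K.ncard := (Set.ncard_pos (Set.toFinite _)).2 hKn
  have hL1 : 0 < L.ncard := (Set.ncard_pos (Set.toFinite _)).2 hLn
  -- the edge bounds on both sides, with and without the contraction
  have boundA : 3 ≤ (Kᶜ : Set V).ncard → ec G Kᶜ + 6 ≤ 3 * (Kᶜ : Set V).ncard := fun h3 =>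
    (hG.of_minor (hasGraphMinor_induce G _)).ec_bound h3
  have boundB : 3 ≤ (S ∪ K).ncard → ec G (S ∪ K) + 6 ≤ 3 * (S ∪ K).ncard := fun h3 =>
    (hG.of_minor (hasGraphMinor_induce G _)).ec_bound h3
  have starA : ∀ w ∈ S, 3 ≤ (Kᶜ : Set V).ncard →
      ec G Kᶜ + {y ∈ S | y ≠ w ∧ ¬ G.Adj w y}.ncard + 6 ≤ 3 * (Kᶜ : Set V).ncard := by
    intro w hw h3
    have h1 := ec_star G (A := Kᶜ) (S := S) (w := w) (hA hw) hA
    have h2 := (hG.of_minor (hasGraphMinor_star G (A := Kᶜ) (K := K) (S := S) (w := w)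
      disjoint_compl_left hKconn (hattK w hw) hattK)).ec_bound h3
    omega
  have starB : ∀ w ∈ S, 3 ≤ (S ∪ K).ncard →
      ec G (S ∪ K) + {y ∈ S | y ≠ w ∧ ¬ G.Adj w y}.ncard + 6 ≤ 3 * (S ∪ K).ncard := by
    intro w hw h3
    have h1 := ec_star G (A := S ∪ K) (S := S) (w := w) (Or.inl hw) Set.subset_union_left
    have hd : Disjoint (S ∪ K) L := by
      rw [Set.disjoint_union_left]
      exact ⟨Set.disjoint_left.2 fun x hx hxL => hLs hxL hx, hLKd.symm⟩
    have h2 := (hG.of_minor (hasGraphMinor_star G (A := S ∪ K) (K := L) (S := S) (w := w)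
      hd hLconn (hattL w hw) hattL)).ec_bound h3
    omega
  have chooseA := ec_le_choose G Kᶜ
  have chooseB := ec_le_choose G (S ∪ K)
  have small : ∀ m : ℕ, (m = 1 → m.choose 2 = 0) ∧ (m = 2 → m.choose 2 = 1) :=
    fun m => ⟨fun h => by subst h; rfl, fun h => by subst h; rfl⟩
  have smA := small (Kᶜ : Set V).ncard
  have smB := small (S ∪ K).ncard
  have : S.ncard = 0 ∨ S.ncard = 1 ∨ S.ncard = 2 ∨ S.ncard = 3 := by omega
  rcases this with h | h | h | h
  · rcases Nat.lt_or_ge (Kᶜ : Set V).ncard 3 with h3 | h3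
    · have := boundB (by omega)
      have : (Kᶜ : Set V).ncard = 1 ∨ (Kᶜ : Set V).ncard = 2 := by omega
      omega
    · have := boundA h3
      rcases Nat.lt_or_ge (S ∪ K).ncard 3 with h4 | h4
      · have : (S ∪ K).ncard = 1 ∨ (S ∪ K).ncard = 2 := by omega
        omega
      · have := boundB h4
        omega
  · rcases Nat.lt_or_ge (Kᶜ : Set V).ncard 3 with h3 | h3
    · have := boundB (by omega)
      have : (Kᶜ : Set V).ncard = 2 := by omega
      omega
    · have := boundA h3
      rcases Nat.lt_or_ge (S ∪ K).ncard 3 with h4 | h4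
      · have : (S ∪ K).ncard = 2 := by omega
        omega
      · have := boundB h4
        omega
  · obtain ⟨u, w, huw, rfl⟩ := Set.ncard_eq_two.1 h
    have h1 := starA w (by simp) (by omega)
    have h2 := starB w (by simp) (by omega)
    by_cases hadj : G.Adj u w
    · have := le_ec_pair G hadj
      omega
    · have : 1 ≤ {y ∈ ({u, w} : Set V) | y ≠ w ∧ ¬ G.Adj w y}.ncard := by
        rw [Nat.one_le_iff_ne_zero, ← Nat.pos_iff_ne_zero, Set.ncard_pos (Set.toFinite _)]
        exact ⟨u, by simp, huw, fun h => hadj h.symm⟩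
      omega
  · obtain ⟨u, v, w, huv, huw, hvw, rfl⟩ := Set.ncard_eq_three.1 h
    have a1 := starA u (by simp) (by omega)
    have a2 := starA v (by simp) (by omega)
    have a3 := starA w (by simp) (by omega)
    have b1 := starB u (by simp) (by omega)
    have b2 := starB v (by simp) (by omega)
    have b3 := starB w (by simp) (by omega)
    have m1 := le_missing G (S := {u, v, w}) (u := v) (v := w) (w := u) (by simp) (by simp)
      hvw huw.symm huv.symm
    have m2 := le_missing G (S := {u, v, w}) (u := u) (v := w) (w := v) (by simp) (by simp)
      huw hvw.symm huv
    have m3 := le_missing G (S := {u, v, w}) (u := u) (v := v) (w := w) (by simp) (by simp)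
      huv hvw huw
    have hS3 := le_ec_triple G huv hvw huw
    rw [G.adj_comm v u] at m2
    rw [G.adj_comm w u, G.adj_comm w v] at m3
    by_cases h1 : G.Adj u v <;> by_cases h2 : G.Adj v w <;> by_cases h3 : G.Adj u w <;>
      simp only [h1, h2, h3, if_true, if_false] at m1 m2 m3 hS3
    · refine hsep ⟨u, v, w, h1, h2, h3, fun hc => ?_⟩
      have heq : ({u, v, w} : Set V)ᶜ = {x | x ≠ u ∧ x ≠ v ∧ x ≠ w} := by
        ext x; simp
      rw [← heq] at hc
      exact hKne ((induce_connected_iff.1 hc).2 K hKs hKn hKc)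
    all_goals omega

/-! ### Cycles and paths -/

/-- A property that passes to neighbours holds on the whole of a connected graph. -/
lemma forall_of_preconnected {W : Type*} {H : SimpleGraph W} (hH : H.Preconnected)
    {P : W → Prop} (h : ∀ a b, H.Adj a b → P a → P b) {a b : W} (ha : P a) : P b := by
  obtain ⟨p⟩ := hH a b
  induction p with
  | nil => exact ha
  | cons hadj _ ih => exact ih (h _ _ hadj ha)

/-- Removing an edge from a cycle leaves a path between its ends. -/
lemma IsCycleSubgraph.exists_path {V : Type*} [Finite V] {T : SimpleGraph V} {C : T.Subgraph}
    (hC : IsCycleSubgraph C) {x y : V} (h : C.Adj x y) :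
    ∃ p : T.Walk x y, p.IsPath ∧ s(x, y) ∉ p.edges ∧
      (∀ e, e ∈ C.edgeSet ↔ e = s(x, y) ∨ e ∈ p.edges) ∧ ∀ v ∈ p.support, v ∈ C.verts := by
  have : Fintype V := Fintype.ofFinite V
  have hcyc : C.spanningCoe.IsCycles := by
    rintro v ⟨w, hw⟩
    exact hC.2 v (C.edge_vert hw)
  have hxy : C.spanningCoe.Adj x y := h
  obtain ⟨p₀, hp₀⟩ := (hcyc.reachable_deleteEdges hxy).exists_isPath
  have hp₀e : s(x, y) ∉ p₀.edges := by
    intro he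
    have := p₀.edges_subset_edgeSet he
    simp at this
  set p := p₀.mapLe (deleteEdges_le (G := C.spanningCoe) {s(x, y)}) with hp
  have hpp : p.IsPath := hp₀.mapLe _
  have hpe : s(x, y) ∉ p.edges := by rw [hp, Walk.edges_mapLe_eq_edges]; exact hp₀e
  have hcy : (Walk.cons hxy.symm p).IsCycle := by
    rw [Walk.cons_isCycle_iff]
    exact ⟨hpp, by rwa [Sym2.eq_swap]⟩
  have hadj : ∀ v ∈ p.support, ∀ w, C.Adj v w → s(v, w) = s(x, y) ∨ s(v, w) ∈ p.edges := by
    intro v hv w hvw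
    have := (hcy.adj_toSubgraph_iff_of_isCycles hcyc (v := v) (by simp [hv]) w).2 hvw
    rw [← Subgraph.mem_edgeSet, Walk.mem_edges_toSubgraph, Walk.edges_cons, List.mem_cons] at this
    rwa [Sym2.eq_swap (a := x)]
  have hall : ∀ v (hv : v ∈ C.verts), v ∈ p.support := by
    intro v hv
    refine forall_of_preconnected hC.1.preconnected (P := fun v => (v : V) ∈ p.support) ?_
      (a := ⟨x, C.edge_vert h⟩) (b := ⟨v, hv⟩) p.start_mem_support
    intro a b hab ha
    rcases hadj a ha b hab with he | he
    · rcases Sym2.eq_iff.1 he with ⟨-, hb⟩ | ⟨-, hb⟩ <;> rw [hb]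
      exacts [p.end_mem_support, p.start_mem_support]
    · exact p.snd_mem_support_of_mem_edges he
  refine ⟨p.mapLe C.spanningCoe_le, hpp.mapLe _, ?_, ?_, ?_⟩
  · rwa [Walk.edges_mapLe_eq_edges]
  · intro e
    rw [Walk.edges_mapLe_eq_edges]
    constructor
    · induction e using Sym2.ind with
      | _ a b =>
        intro he
        exact hadj a (hall a (C.edge_vert he)) b he
    · rintro (rfl | he)
      · exact h
      · have := p.edges_subset_edgeSet he
        induction e using Sym2.ind with
        | _ a b => exact this
  · intro v hv
    rw [Walk.support_mapLe_eq_support] at hv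
    rcases (p.mem_support_iff_exists_mem_edges_of_not_nil (Walk.not_nil_of_ne h.ne)).1 hv with ⟨e, he, hve⟩
    have := p.edges_subset_edgeSet he
    exact C.mem_verts_of_mem_edge this hve

lemma isCycleSubgraph_toSubgraph {V : Type*} {T : SimpleGraph V} {u : V} {p : T.Walk u u}
    (hp : p.IsCycle) : IsCycleSubgraph p.toSubgraph := by
  refine ⟨p.toSubgraph_connected.coe, fun v hv => ?_⟩
  exact hp.ncard_neighborSet_toSubgraph_eq_two (p.mem_verts_toSubgraph.1 hv)

/-- Two paths with common ends and no other common vertex form a cycle, or are the same edge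
and cancel. -/
lemma exists_cycle_of_paths {V : Type*} {T : SimpleGraph V} {u v : V} {p q : T.Walk u v}
    (hp : p.IsPath) (hq : q.IsPath) (huv : u ≠ v)
    (hpq : ∀ z ∈ p.support, z ∈ q.support → z = u ∨ z = v) :
    ∃ R : Multiset T.Subgraph, Multiset.card R ≤ 1 ∧
      (∀ C ∈ R, IsCycleSubgraph C ∧ ∀ z ∈ C.verts, z ∈ p.support ∨ z ∈ q.support) ∧
      ∀ e, R.countP (fun C => e ∈ C.edgeSet) + 2 * (if e ∈ p.edges ∧ e ∈ q.edges then 1 else 0) =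
        (if e ∈ p.edges then 1 else 0) + (if e ∈ q.edges then 1 else 0) := by
  by_cases hlen : 1 < p.length ∨ 1 < q.length
  · have hcy : (p.append q.reverse).IsCycle := by
      refine hp.isCycle_append hq.reverse ?_ (by simpa using hlen)
      intro z hz hz'
      have h1 := List.mem_of_mem_tail hz
      have h2 : z ∈ q.support := by
        have := List.mem_of_mem_tail hz'
        simpa using this
      rcases hpq z h1 h2 with rfl | rfl
      · exact (List.nodup_cons.1 (p.cons_tail_support.symm ▸ hp.support_nodup)).1 hz
      · exact (List.nodup_cons.1 (q.reverse.cons_tail_support.symm ▸ hq.reverse.support_nodup)).1 hz'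
    have hdis : ∀ e, e ∈ p.edges → e ∉ q.edges := by
      intro e he he'
      have := hcy.edges_nodup
      rw [Walk.edges_append, Walk.edges_reverse] at this
      exact List.disjoint_of_nodup_append this he (by simpa using he')
    refine ⟨{(p.append q.reverse).toSubgraph}, by simp, ?_, ?_⟩
    · intro C hC
      rw [Multiset.mem_singleton] at hC
      subst hC
      refine ⟨isCycleSubgraph_toSubgraph hcy, fun z hz => ?_⟩
      rw [Walk.mem_verts_toSubgraph, Walk.mem_support_append_iff] at hz
      simpa using hz
    · intro e
      have := hdis e
      rw [← Multiset.cons_zero, Multiset.countP_cons, Multiset.countP_zero,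
        Walk.mem_edges_toSubgraph, Walk.edges_append, List.mem_append, Walk.edges_reverse,
        List.mem_reverse]
      by_cases h1 : e ∈ p.edges <;> by_cases h2 : e ∈ q.edges <;> simp_all
  · have hone : ∀ w : T.Walk u v, w.length ≤ 1 → w.edges = [s(u, v)] := by
      intro w hw
      cases w with
      | nil => exact absurd rfl huv
      | cons h w' =>
        cases w' with
        | nil => simp
        | cons h' w'' => simp at hw
    push Not at hlen
    refine ⟨0, by simp, by simp, fun e => ?_⟩
    rw [hone p hlen.1, hone q hlen.2]
    by_cases h : e = s(u, v) <;> simp [h]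

/-- The symmetric difference of two cycles that share an edge `xy`, and at most one vertex `z`
apart from its ends, splits into at most two cycles. -/
lemma exists_cycle_swap {V : Type*} [Finite V] {T : SimpleGraph V} {C D : T.Subgraph} {x y z : V}
    (hC : IsCycleSubgraph C) (hD : IsCycleSubgraph D) (hCxy : C.Adj x y) (hDxy : D.Adj x y)
    (hxz : x ≠ z) (hyz : y ≠ z)
    (hCD : ∀ v ∈ C.verts, v ∈ D.verts → v = x ∨ v = y ∨ v = z) :
    ∃ R : Multiset T.Subgraph, Multiset.card R ≤ 2 ∧
      (∀ C' ∈ R, IsCycleSubgraph C' ∧ C'.verts ⊆ C.verts ∪ D.verts) ∧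
      ∀ e, R.countP (fun C' => e ∈ C'.edgeSet) +
          2 * (if e ∈ C.edgeSet ∧ e ∈ D.edgeSet then 1 else 0) =
        (if e ∈ C.edgeSet then 1 else 0) + (if e ∈ D.edgeSet then 1 else 0) := by
  obtain ⟨p, hp, hpe, hpC, hpv⟩ := hC.exists_path hCxy
  obtain ⟨q, hq, hqe, hqD, hqv⟩ := hD.exists_path hDxy
  have hxy := hCxy.ne
  by_cases hz : z ∈ p.support ∧ z ∈ q.support
  · -- both paths run through `z`: treat the halves separately
    obtain ⟨hzp, hzq⟩ := hz
    have hyp := Walk.endpoint_notMem_support_takeUntil hp hzp hyz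
    have hyq := Walk.endpoint_notMem_support_takeUntil hq hzq hyz
    have start : ∀ (r : T.Walk x y) (hr : r.IsPath) (hzr : z ∈ r.support),
        x ∉ (r.dropUntil z hzr).support := by
      intro r hr hzr hmem
      have hs := hr.support_nodup
      rw [← r.take_spec hzr, Walk.support_append, ← (r.takeUntil z hzr).cons_tail_support] at hs
      have hmem' : x ∈ (r.dropUntil z hzr).support.tail := by
        rw [← Walk.cons_tail_support, List.mem_cons] at hmem
        exact hmem.resolve_left hxz
      exact (List.nodup_cons.1 hs).1 (List.mem_append_right _ hmem')
    obtain ⟨R₁, hR₁c, hR₁, hR₁e⟩ := exists_cycle_of_paths (hp.takeUntil hzp) (hq.takeUntil hzq) hxz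
      (by
        intro v hv hv'
        rcases hCD v (hpv v (p.support_takeUntil_subset_support hzp hv))
          (hqv v (q.support_takeUntil_subset_support hzq hv')) with h | rfl | h
        exacts [Or.inl h, absurd hv hyp, Or.inr h])
    obtain ⟨R₂, hR₂c, hR₂, hR₂e⟩ := exists_cycle_of_paths (hp.dropUntil hzp) (hq.dropUntil hzq)
      hyz.symm (by
        intro v hv hv'
        rcases hCD v (hpv v (p.support_dropUntil_subset_support hzp hv))
          (hqv v (q.support_dropUntil_subset_support hzq hv')) with rfl | h | h
        exacts [absurd hv (start p hp hzp), Or.inr h, Or.inl h])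
    refine ⟨R₁ + R₂, by rw [Multiset.card_add]; omega, ?_, ?_⟩
    · intro C' hC'
      rcases Multiset.mem_add.1 hC' with h | h
      · refine ⟨(hR₁ C' h).1, fun v hv => ?_⟩
        exact ((hR₁ C' h).2 v hv).imp
          (fun h => hpv v (p.support_takeUntil_subset_support hzp h))
          (fun h => hqv v (q.support_takeUntil_subset_support hzq h))
      · refine ⟨(hR₂ C' h).1, fun v hv => ?_⟩
        exact ((hR₂ C' h).2 v hv).imp
          (fun h => hpv v (p.support_dropUntil_subset_support hzp h))
          (fun h => hqv v (q.support_dropUntil_subset_support hzq h))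
    · intro e
      have h1 := hR₁e e
      have h2 := hR₂e e
      have spec : ∀ (r : T.Walk x y) (hzr : z ∈ r.support),
          e ∈ r.edges ↔ e ∈ (r.takeUntil z hzr).edges ∨ e ∈ (r.dropUntil z hzr).edges := by
        intro r hzr
        conv_lhs => rw [← r.take_spec hzr]
        rw [Walk.edges_append, List.mem_append]
      have d1 : e ∈ (p.takeUntil z hzp).edges → e ∉ (p.dropUntil z hzp).edges :=
        fun h h' => hp.isTrail.disjoint_edges_takeUntil_dropUntil hzp h h'
      have d2 : e ∈ (q.takeUntil z hzq).edges → e ∉ (q.dropUntil z hzq).edges :=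
        fun h h' => hq.isTrail.disjoint_edges_takeUntil_dropUntil hzq h h'
      -- an edge of one half of `p` cannot be in the other half of `q`
      have mem_ends : ∀ (a b c d : V) (r : T.Walk a b) (r' : T.Walk c d),
          (∀ v ∈ r.support, v ∈ r'.support → v = z) → e ∈ r.edges → e ∉ r'.edges := by
        intro a b c d r r' hrr he he'
        induction e using Sym2.ind with
        | _ s t =>
          have hs := hrr s (r.fst_mem_support_of_mem_edges he) (r'.fst_mem_support_of_mem_edges he')
          have ht := hrr t (r.snd_mem_support_of_mem_edges he) (r'.snd_mem_support_of_mem_edges he')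
          exact (r.adj_of_mem_edges he).ne (hs.trans ht.symm)
      have d3 : e ∈ (p.takeUntil z hzp).edges → e ∉ (q.dropUntil z hzq).edges := by
        refine mem_ends _ _ _ _ _ _ fun v hv hv' => ?_
        rcases hCD v (hpv v (p.support_takeUntil_subset_support hzp hv))
          (hqv v (q.support_dropUntil_subset_support hzq hv')) with rfl | rfl | h
        exacts [absurd hv' (start q hq hzq), absurd hv hyp, h]
      have d4 : e ∈ (p.dropUntil z hzp).edges → e ∉ (q.takeUntil z hzq).edges := by
        refine mem_ends _ _ _ _ _ _ fun v hv hv' => ?_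
        rcases hCD v (hpv v (p.support_dropUntil_subset_support hzp hv))
          (hqv v (q.support_takeUntil_subset_support hzq hv')) with rfl | rfl | h
        exacts [absurd hv (start p hp hzp), absurd hv' hyq, h]
      have e1 : e = s(x, y) → e ∉ p.edges ∧ e ∉ q.edges := by rintro rfl; exact ⟨hpe, hqe⟩
      rw [spec p hzp, spec q hzq] at e1
      rw [Multiset.countP_add, hpC, hqD, spec p hzp, spec q hzq]
      clear hpC hqD spec mem_ends hR₁e hR₂e hR₁ hR₂
      by_cases h0 : e = s(x, y)
      · have := e1 h0
        simp_all
      · -- a finite check over the membership of `e` in the four half-paths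
        by_cases a1 : e ∈ (p.takeUntil z hzp).edges <;> by_cases a2 : e ∈ (p.dropUntil z hzp).edges <;>
          by_cases a3 : e ∈ (q.takeUntil z hzq).edges <;>
          by_cases a4 : e ∈ (q.dropUntil z hzq).edges <;>
          simp only [a1, a2, a3, a4, h0, if_true, if_false, or_true, true_or, or_false, false_or,
            and_true, and_false, true_and, false_and, or_self, and_self, not_true, not_false_iff,
            imp_false, forall_true_left] at h1 h2 d1 d2 d3 d4 ⊢ <;> omega
  · obtain ⟨R, hRc, hR, hRe⟩ := exists_cycle_of_paths hp hq hxy (by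
      intro v hv hv'
      rcases hCD v (hpv v hv) (hqv v hv') with h | h | rfl
      exacts [Or.inl h, Or.inr h, absurd ⟨hv, hv'⟩ hz])
    refine ⟨R, by omega, fun C' hC' => ⟨(hR C' hC').1, fun v hv => ?_⟩, fun e => ?_⟩
    · exact ((hR C' hC').2 v hv).imp (hpv v) (hqv v)
    · have h1 := hRe e
      have e1 : e = s(x, y) → e ∉ p.edges ∧ e ∉ q.edges := by rintro rfl; exact ⟨hpe, hqe⟩
      rw [hpC, hqD]
      clear hpC hqD hRe hR
      by_cases h0 : e = s(x, y)
      · have := e1 h0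
        simp_all
      · by_cases a1 : e ∈ p.edges <;> by_cases a2 : e ∈ q.edges <;> simp_all

/-- A cycle that contains the three edges of a triangle is that triangle. -/
lemma IsCycleSubgraph.eq_triangle {V : Type*} [Finite V] {T : SimpleGraph V} {C : T.Subgraph}
    (hC : IsCycleSubgraph C) {x y z : V} (hxy : C.Adj x y) (hyz : C.Adj y z) (hxz : C.Adj x z)
    {e : Sym2 V} (he : e ∈ C.edgeSet) : e = s(x, y) ∨ e = s(y, z) ∨ e = s(x, z) := by
  have nb : ∀ {a b c}, C.Adj a b → C.Adj a c → b ≠ c → ∀ d, C.Adj a d → d = b ∨ d = c := by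
    intro a b c hab hac hbc d had
    have h2 := hC.2 a (C.edge_vert hab)
    have hsub : ({b, c} : Set V) ⊆ C.neighborSet a := by
      rintro t (rfl | rfl)
      exacts [hab, hac]
    have := Set.eq_of_subset_of_ncard_le hsub (by rw [h2, Set.ncard_pair hbc]) (Set.toFinite _)
    have hd : d ∈ C.neighborSet a := had
    rw [← this] at hd
    simpa using hd
  have nx := nb hxy hxz hyz.ne
  have ny := nb hxy.symm hyz hxz.ne
  have nz := nb hxz.symm hyz.symm hxy.ne
  induction e using Sym2.ind with
  | _ a b =>
    have hab : C.Adj a b := he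
    have ha : a = x ∨ a = y ∨ a = z := by
      refine forall_of_preconnected hC.1.preconnected
        (P := fun v => (v : V) = x ∨ (v : V) = y ∨ (v : V) = z) ?_
        (a := ⟨x, C.edge_vert hxy⟩) (b := ⟨a, C.edge_vert hab⟩) (Or.inl rfl)
      rintro ⟨c, hc⟩ ⟨d, hd⟩ hcd hP
      have hcd' : C.Adj c d := hcd
      dsimp only at hP ⊢
      rcases hP with rfl | rfl | rfl
      · have := nx d hcd'; tauto
      · have := ny d hcd'; tauto
      · have := nz d hcd'; tauto
    rcases ha with rfl | rfl | rfl
    · rcases nx b hab with rfl | rfl <;> simp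
    · rcases ny b hab with rfl | rfl <;> simp
    · rcases nz b hab with rfl | rfl <;> simp

/-! ### Matching the traces of two covers on the triangle -/

/-- The trace of a cycle on the three edges of a triangle is encoded as a subset of `{0, 1, 2}`,
written as a number below `8`; `hasBit i t` says that the `i`-th edge belongs to the trace `t`. -/
def hasBit (i : Fin 3) (t : Fin 8) : Bool := t.val.testBit i.val

/-- Every multiset of traces that covers each triangle edge twice contains one of these.
The first one consists of two copies of the full triangle. -/
def tracePatterns : List (List (Fin 8)) :=
  [[7, 7], [1, 2, 4], [7, 3, 4], [7, 5, 2], [7, 6, 1], [3, 5, 6], [3, 3, 4, 4], [5, 5, 2, 2],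
    [6, 6, 1, 1], [5, 6, 1, 2], [3, 6, 1, 4], [3, 5, 2, 4]]

/-- A backtracking search for a matching between two lists of traces in which each edge of `need` is
common to exactly one matched pair and no other edge is. -/
def findMatching : ℕ → List (Fin 8) → List (Fin 8) → Fin 8 → Option (List (Fin 8 × Fin 8))
  | 0, _, _, need => if need = 0 then some [] else none
  | n + 1, p, q, need =>
    if need = 0 then some [] else
      p.findSome? fun c => q.findSome? fun d =>
        let m := c &&& d
        if m ≠ 0 ∧ m &&& need = m then
          (findMatching n (p.erase c) (q.erase d) (need - m)).map ((c, d) :: ·)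
        else none

/-- Validity of a matching between two multisets of traces. -/
def IsTraceMatching (M N : Multiset (Fin 8)) (R : Multiset (Fin 8 × Fin 8)) : Prop :=
  R.map Prod.fst ≤ M ∧ R.map Prod.snd ≤ N ∧
    (∀ r ∈ R, ∃ i, hasBit i r.1 = true ∧ hasBit i r.2 = true) ∧
    ∀ i, R.countP (fun r => hasBit i r.1 = true ∧ hasBit i r.2 = true) = 1

instance (M N : Multiset (Fin 8)) (R : Multiset (Fin 8 × Fin 8)) :
    Decidable (IsTraceMatching M N R) := by
  unfold IsTraceMatching; infer_instance

lemma findMatching_spec : ∀ p ∈ tracePatterns.tail, ∀ q ∈ tracePatterns.tail,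
    IsTraceMatching p q (((findMatching 3 p q 7).getD [] : List (Fin 8 × Fin 8)) : Multiset _) := by
  decide +kernel

lemma countP_eq_sum_count (M : Multiset (Fin 8)) (f : Fin 8 → Bool) :
    M.countP (fun t => f t = true) = ∑ t, if f t = true then M.count t else 0 := by
  induction M using Multiset.induction_on with
  | empty => simp
  | cons a M ih =>
    rw [Multiset.countP_cons, ih]
    have : ∀ t, (if f t = true then (a ::ₘ M).count t else 0) =
        (if f t = true then M.count t else 0) + if t = a then (if f a = true then 1 else 0) else 0 := by
      intro t
      rw [Multiset.count_cons]
      split_ifs <;> simp_all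
    simp only [this, Finset.sum_add_distrib, Finset.sum_ite_eq', Finset.mem_univ, if_true]

lemma exists_tracePattern (M : Multiset (Fin 8))
    (hM : ∀ i, M.countP (fun t => hasBit i t = true) = 2) :
    ∃ p ∈ tracePatterns, (p : Multiset (Fin 8)) ≤ M := by
  have h0 := hM 0
  have h1 := hM 1
  have h2 := hM 2
  rw [countP_eq_sum_count M (hasBit _), Fin.sum_univ_eight] at h0 h1 h2
  simp only [hasBit, show ((0 : Fin 3) : ℕ) = 0 from rfl, show ((1 : Fin 3) : ℕ) = 1 from rfl,
    show ((2 : Fin 3) : ℕ) = 2 from rfl] at h0 h1 h2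
  simp +decide only [if_true, if_false, zero_add, add_zero] at h0 h1 h2
  have key : ∀ p : List (Fin 8), (∀ t, p.count t ≤ M.count t) →
      p ∈ tracePatterns → ∃ p ∈ tracePatterns, (p : Multiset (Fin 8)) ≤ M :=
    fun p hp hmem => ⟨p, hmem, Multiset.le_iff_count.2 (by simpa using hp)⟩
  by_contra hcon
  have key' : ∀ p ∈ tracePatterns, ¬ ∀ t, p.count t ≤ M.count t :=
    fun p hp h => hcon (key p h hp)
  clear hcon key hM
  have all8 : ∀ Q : Fin 8 → Prop,
      (∀ t, Q t) ↔ Q 0 ∧ Q 1 ∧ Q 2 ∧ Q 3 ∧ Q 4 ∧ Q 5 ∧ Q 6 ∧ Q 7 := by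
    intro Q
    simp only [Fin.forall_fin_succ, Fin.forall_fin_zero, and_true]
    exact Iff.rfl
  simp only [tracePatterns, List.forall_mem_cons, all8] at key'
  simp +decide only [List.count_cons, List.count_nil, if_true, if_false, zero_add, add_zero,
    Nat.zero_le, true_and, and_true, List.not_mem_nil, false_imp_iff, implies_true] at key'
  clear all8
  generalize M.count 1 = c1, M.count 2 = c2, M.count 3 = c3, M.count 4 = c4, M.count 5 = c5,
    M.count 6 = c6, M.count 7 = c7 at *
  have h7 : c7 ≤ 2 := by omega
  have h3 : c3 ≤ 2 := by omega
  have h5 : c5 ≤ 2 := by omega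
  have h6 : c6 ≤ 2 := by omega
  interval_cases c7 <;> interval_cases c3 <;> interval_cases c5 <;> interval_cases c6 <;> omega

/-- Two covers of the triangle can be matched along their traces, unless one of them contains
the triangle twice. -/
lemma exists_traceMatching (M N : Multiset (Fin 8))
    (hM : ∀ i, M.countP (fun t => hasBit i t = true) = 2)
    (hN : ∀ i, N.countP (fun t => hasBit i t = true) = 2) :
    {7, 7} ≤ M ∨ {7, 7} ≤ N ∨ ∃ R, IsTraceMatching M N R := by
  obtain ⟨p, hp, hpM⟩ := exists_tracePattern M hM
  obtain ⟨q, hq, hqN⟩ := exists_tracePattern N hN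
  rcases List.mem_cons.1 hp with rfl | hp
  · exact Or.inl hpM
  rcases List.mem_cons.1 hq with rfl | hq
  · exact Or.inr (Or.inl hqN)
  obtain ⟨h1, h2, h3⟩ := findMatching_spec p hp q hq
  exact Or.inr (Or.inr ⟨_, h1.trans hpM, h2.trans hqN, h3⟩)

lemma exists_le_map_eq {α γ : Type*} {f : α → γ} {S : Multiset α} {M : Multiset γ}
    (h : M ≤ S.map f) : ∃ S' ≤ S, S'.map f = M := by
  induction M using Multiset.induction_on generalizing S with
  | empty => exact ⟨0, Multiset.zero_le _, rfl⟩
  | cons c M ih =>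
    obtain ⟨a, ha, rfl⟩ := Multiset.mem_map.1 (Multiset.mem_of_le h (Multiset.mem_cons_self c M))
    obtain ⟨S₀, rfl⟩ := Multiset.exists_cons_of_mem ha
    rw [Multiset.map_cons, Multiset.cons_le_cons_iff] at h
    obtain ⟨S', hS', rfl⟩ := ih h
    exact ⟨a ::ₘ S', (Multiset.cons_le_cons_iff a).2 hS', Multiset.map_cons _ _ _⟩

/-- A matching between the images of two multisets comes from a matching between them. -/
lemma exists_pairs_lift {α β γ δ : Type*} {f : α → γ} {g : β → δ} {R : Multiset (γ × δ)} :
    ∀ {S : Multiset α} {S' : Multiset β}, R.map Prod.fst ≤ S.map f → R.map Prod.snd ≤ S'.map g →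
    ∃ Q : Multiset (α × β), Q.map Prod.fst ≤ S ∧ Q.map Prod.snd ≤ S' ∧
      Q.map (Prod.map f g) = R := by
  induction R using Multiset.induction_on with
  | empty => exact fun _ _ => ⟨0, by simp, by simp, rfl⟩
  | cons r R ih =>
    intro S S' h h'
    rw [Multiset.map_cons] at h h'
    obtain ⟨a, ha, hfa⟩ := Multiset.mem_map.1 (Multiset.mem_of_le h (Multiset.mem_cons_self _ _))
    obtain ⟨b, hb, hgb⟩ := Multiset.mem_map.1 (Multiset.mem_of_le h' (Multiset.mem_cons_self _ _))
    obtain ⟨S₀, rfl⟩ := Multiset.exists_cons_of_mem ha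
    obtain ⟨S₁, rfl⟩ := Multiset.exists_cons_of_mem hb
    rw [Multiset.map_cons, hfa, Multiset.cons_le_cons_iff] at h
    rw [Multiset.map_cons, hgb, Multiset.cons_le_cons_iff] at h'
    obtain ⟨Q, h1, h2, h3⟩ := ih h h'
    refine ⟨(a, b) ::ₘ Q, ?_, ?_, ?_⟩
    · rw [Multiset.map_cons]; exact (Multiset.cons_le_cons_iff a).2 h1
    · rw [Multiset.map_cons]; exact (Multiset.cons_le_cons_iff b).2 h2
    · rw [Multiset.map_cons, h3, Prod.map_apply, hfa, hgb]

/-! ### Gluing two covers along a triangle -/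

/-- `S` is a cycle double cover of the subgraph of `T` induced on `s`, with the cycles regarded
as subgraphs of `T`. -/
def IsCDCOn {V : Type*} (T : SimpleGraph V) (s : Set V) (S : Multiset T.Subgraph) : Prop :=
  (∀ C ∈ S, IsCycleSubgraph C ∧ C.verts ⊆ s) ∧
  ∀ u ∈ s, ∀ v ∈ s, T.Adj u v → S.countP (fun C => s(u, v) ∈ C.edgeSet) = 2

lemma IsCDCOn.countP_eq_zero {V : Type*} {T : SimpleGraph V} {s : Set V} {S : Multiset T.Subgraph}
    (hS : IsCDCOn T s S) {u v : V} (h : ¬ (u ∈ s ∧ v ∈ s)) :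
    S.countP (fun C => s(u, v) ∈ C.edgeSet) = 0 := by
  rw [Multiset.countP_eq_zero]
  intro C hC he
  have he' : C.Adj u v := he
  exact h ⟨(hS.1 C hC).2 (C.edge_vert he'), (hS.1 C hC).2 (C.edge_vert he'.symm)⟩

/-- The edges of the triangle `xyz`. -/
def triEdges {V : Type*} (x y z : V) : Fin 3 → Sym2 V := ![s(x, y), s(y, z), s(x, z)]

/-- The trace of a subgraph on three edges, encoded as in `hasBit`. -/
noncomputable def trace {V : Type*} {T : SimpleGraph V} (E : Fin 3 → Sym2 V) (C : T.Subgraph) :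
    Fin 8 :=
  (if E 0 ∈ C.edgeSet then 1 else 0) + (if E 1 ∈ C.edgeSet then 2 else 0) +
    if E 2 ∈ C.edgeSet then 4 else 0

lemma hasBit_trace {V : Type*} {T : SimpleGraph V} (E : Fin 3 → Sym2 V) (C : T.Subgraph)
    (i : Fin 3) : hasBit i (trace E C) = true ↔ E i ∈ C.edgeSet := by
  unfold trace
  fin_cases i <;> by_cases h0 : E 0 ∈ C.edgeSet <;> by_cases h1 : E 1 ∈ C.edgeSet <;>
    by_cases h2 : E 2 ∈ C.edgeSet <;> simp [h0, h1, h2] <;> decide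

lemma countP_trace {V : Type*} {T : SimpleGraph V} (E : Fin 3 → Sym2 V) (S : Multiset T.Subgraph)
    (i : Fin 3) : (S.map (trace E)).countP (fun t => hasBit i t = true) =
      S.countP (fun C => E i ∈ C.edgeSet) := by
  rw [Multiset.countP_map, Multiset.countP_eq_card_filter]
  congr 1
  refine Multiset.filter_congr fun C _ => ?_
  exact hasBit_trace E C i

/-- The setting of the gluing step: `a` and `b` overlap in a triangle `xyz` and no edge runs
between the two remaining parts. -/
structure IsTriangleGluing {V : Type*} (T : SimpleGraph V) (a b : Set V) (x y z : V) : Prop where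
  inter : a ∩ b = {x, y, z}
  xy : T.Adj x y
  yz : T.Adj y z
  xz : T.Adj x z
  cross : ∀ u ∈ a, ∀ v ∈ b, T.Adj u v → u ∈ b ∨ v ∈ a

namespace IsTriangleGluing

variable {V : Type*} {T : SimpleGraph V} {a b : Set V} {x y z : V}

lemma swap (h : IsTriangleGluing T a b x y z) : IsTriangleGluing T b a x y z where
  inter := by rw [Set.inter_comm, h.inter]
  xy := h.xy
  yz := h.yz
  xz := h.xz
  cross := fun u hu v hv huv => (h.cross v hv u hu huv.symm).symm

lemma mem (h : IsTriangleGluing T a b x y z) {v : V} :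
    v ∈ a ∧ v ∈ b ↔ v = x ∨ v = y ∨ v = z := by
  rw [← Set.mem_inter_iff, h.inter]; simp

lemma same_side (h : IsTriangleGluing T a b x y z) {u v : V} (hu : u ∈ a ∪ b) (hv : v ∈ a ∪ b)
    (huv : T.Adj u v) : (u ∈ a ∧ v ∈ a) ∨ (u ∈ b ∧ v ∈ b) := by
  rcases hu with hu | hu <;> rcases hv with hv | hv
  · exact Or.inl ⟨hu, hv⟩
  · rcases h.cross u hu v hv huv with h' | h'
    exacts [Or.inr ⟨h', hv⟩, Or.inl ⟨hu, h'⟩]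
  · rcases h.cross v hv u hu huv.symm with h' | h'
    exacts [Or.inr ⟨hu, h'⟩, Or.inl ⟨h', hv⟩]
  · exact Or.inr ⟨hu, hv⟩

lemma exists_index (h : IsTriangleGluing T a b x y z) {u v : V} (huv : u ≠ v)
    (hu : u ∈ a ∧ u ∈ b) (hv : v ∈ a ∧ v ∈ b) : ∃ i, s(u, v) = triEdges x y z i := by
  rw [h.mem] at hu hv
  rcases hu with rfl | rfl | rfl <;> rcases hv with rfl | rfl | rfl
  all_goals first
    | exact absurd rfl huv
    | exact ⟨0, rfl⟩
    | exact ⟨1, rfl⟩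
    | exact ⟨2, rfl⟩
    | exact ⟨0, Sym2.eq_swap⟩
    | exact ⟨1, Sym2.eq_swap⟩
    | exact ⟨2, Sym2.eq_swap⟩

lemma countP_index (h : IsTriangleGluing T a b x y z) {S : Multiset T.Subgraph}
    (hS : IsCDCOn T a S) (i : Fin 3) : S.countP (fun C => triEdges x y z i ∈ C.edgeSet) = 2 := by
  have hx := (h.mem.2 (Or.inl rfl)).1
  have hy := (h.mem.2 (Or.inr (Or.inl rfl))).1
  have hz := (h.mem.2 (Or.inr (Or.inr rfl))).1
  fin_cases i
  exacts [hS.2 x hx y hy h.xy, hS.2 y hy z hz h.yz, hS.2 x hx z hz h.xz]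

/-- If one cover contains the triangle twice, both copies can be dropped. -/
lemma glue_of_double [Finite V] (h : IsTriangleGluing T a b x y z) {S S' : Multiset T.Subgraph}
    (hS : IsCDCOn T a S) (hS' : IsCDCOn T b S')
    (h7 : {7, 7} ≤ S.map (trace (triEdges x y z))) :
    ∃ R, IsCDCOn T (a ∪ b) R ∧ Multiset.card R ≤ Multiset.card S + Multiset.card S' := by
  obtain ⟨D, hD, hD7⟩ := exists_le_map_eq h7
  obtain ⟨S₀, rfl⟩ := Multiset.le_iff_exists_add.1 hD
  have hall : ∀ C ∈ D, ∀ i, triEdges x y z i ∈ C.edgeSet := by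
    intro C hC i
    have : trace (triEdges x y z) C = 7 := by
      have := Multiset.mem_map_of_mem (trace (triEdges x y z)) hC
      rw [hD7] at this
      simpa using this
    rw [← hasBit_trace, this]
    revert i
    decide
  have hcard : Multiset.card D = 2 := by
    rw [← Multiset.card_map (trace (triEdges x y z)), hD7]; rfl
  have honly : ∀ C ∈ D, ∀ e ∈ C.edgeSet, ∃ i, e = triEdges x y z i := by
    intro C hC e he
    rcases (hS.1 C (Multiset.mem_add.2 (Or.inl hC))).1.eq_triangle (hall C hC 0) (hall C hC 1)
      (hall C hC 2) he with rfl | rfl | rfl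
    exacts [⟨0, rfl⟩, ⟨1, rfl⟩, ⟨2, rfl⟩]
  refine ⟨S₀ + S', ⟨?_, ?_⟩, by rw [Multiset.card_add, Multiset.card_add]; omega⟩
  · intro C hC
    rcases Multiset.mem_add.1 hC with hC | hC
    · have := hS.1 C (Multiset.mem_add.2 (Or.inr hC))
      exact ⟨this.1, this.2.trans Set.subset_union_left⟩
    · have := hS'.1 C hC
      exact ⟨this.1, this.2.trans Set.subset_union_right⟩
  · intro u hu v hv huv
    rw [Multiset.countP_add]
    by_cases hb : u ∈ b ∧ v ∈ b
    · have h1 := hS'.2 u hb.1 v hb.2 huv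
      have h2 : S₀.countP (fun C => s(u, v) ∈ C.edgeSet) = 0 := by
        by_cases ha : u ∈ a ∧ v ∈ a
        · obtain ⟨i, hi⟩ := h.exists_index huv.ne ⟨ha.1, hb.1⟩ ⟨ha.2, hb.2⟩
          have h3 := hS.2 u ha.1 v ha.2 huv
          have h4 : D.countP (fun C => s(u, v) ∈ C.edgeSet) = Multiset.card D :=
            Multiset.countP_eq_card.2 fun C hC => by rw [hi]; exact hall C hC i
          rw [Multiset.countP_add] at h3
          omega
        · have h3 := hS.countP_eq_zero ha
          rw [Multiset.countP_add] at h3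
          omega
      omega
    · have h1 := hS'.countP_eq_zero hb
      have ha : u ∈ a ∧ v ∈ a := (h.same_side hu hv huv).resolve_right hb
      have h3 := hS.2 u ha.1 v ha.2 huv
      have h4 : D.countP (fun C => s(u, v) ∈ C.edgeSet) = 0 := by
        rw [Multiset.countP_eq_zero]
        intro C hC he
        obtain ⟨i, hi⟩ := honly C hC _ he
        have mem_b : ∀ i, ∀ w ∈ triEdges x y z i, w ∈ b := by
          intro i w hw
          have : w = x ∨ w = y ∨ w = z := by
            fin_cases i <;> simp [triEdges] at hw <;> tauto
          exact (h.mem.2 this).2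
        exact hb ⟨mem_b i u (hi ▸ Sym2.mem_mk_left u v), mem_b i v (hi ▸ Sym2.mem_mk_right u v)⟩
      rw [Multiset.countP_add] at h3
      omega

/-- The cycles of the matched pairs are replaced by the pieces of their symmetric differences. -/
lemma exists_swap_all [Finite V] (h : IsTriangleGluing T a b x y z)
    (Q : Multiset (T.Subgraph × T.Subgraph)) :
    (∀ r ∈ Q, IsCycleSubgraph r.1 ∧ r.1.verts ⊆ a ∧ IsCycleSubgraph r.2 ∧ r.2.verts ⊆ b ∧
      ∃ i, triEdges x y z i ∈ r.1.edgeSet ∧ triEdges x y z i ∈ r.2.edgeSet) →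
    ∃ W : Multiset T.Subgraph, Multiset.card W ≤ 2 * Multiset.card Q ∧
      (∀ C ∈ W, IsCycleSubgraph C ∧ C.verts ⊆ a ∪ b) ∧
      ∀ e, W.countP (fun C => e ∈ C.edgeSet) +
          2 * Q.countP (fun r => e ∈ r.1.edgeSet ∧ e ∈ r.2.edgeSet) =
        (Q.map Prod.fst).countP (fun C => e ∈ C.edgeSet) +
          (Q.map Prod.snd).countP (fun C => e ∈ C.edgeSet) := by
  induction Q using Multiset.induction_on with
  | empty => exact fun _ => ⟨0, by simp, by simp, by simp⟩
  | cons r Q ih =>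
    intro hQ
    obtain ⟨W, hWc, hW, hWe⟩ := ih fun r' hr' => hQ r' (Multiset.mem_cons_of_mem hr')
    obtain ⟨hC, hCa, hD, hDb, i, hi, hi'⟩ := hQ r (Multiset.mem_cons_self r Q)
    have hcom : ∀ v ∈ r.1.verts, v ∈ r.2.verts → v = x ∨ v = y ∨ v = z :=
      fun v hv hv' => h.mem.1 ⟨hCa hv, hDb hv'⟩
    have hR : ∃ R : Multiset T.Subgraph, Multiset.card R ≤ 2 ∧
      (∀ C' ∈ R, IsCycleSubgraph C' ∧ C'.verts ⊆ r.1.verts ∪ r.2.verts) ∧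
      ∀ e, R.countP (fun C' => e ∈ C'.edgeSet) +
          2 * (if e ∈ r.1.edgeSet ∧ e ∈ r.2.edgeSet then 1 else 0) =
        (if e ∈ r.1.edgeSet then 1 else 0) + (if e ∈ r.2.edgeSet then 1 else 0) := by
      fin_cases i
      · exact exists_cycle_swap hC hD hi hi' h.xz.ne h.yz.ne hcom
      · exact exists_cycle_swap hC hD hi hi' h.xy.ne.symm h.xz.ne.symm
          fun v hv hv' => by have := hcom v hv hv'; tauto
      · exact exists_cycle_swap hC hD hi hi' h.xy.ne h.yz.ne.symm
          fun v hv hv' => by have := hcom v hv hv'; tauto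
    obtain ⟨R, hRc, hR, hRe⟩ := hR
    refine ⟨R + W, by rw [Multiset.card_add, Multiset.card_cons]; omega, ?_, ?_⟩
    · intro C hC
      rcases Multiset.mem_add.1 hC with hC | hC
      · exact ⟨(hR C hC).1, (hR C hC).2.trans (Set.union_subset_union hCa hDb)⟩
      · exact hW C hC
    · intro e
      have h1 := hWe e
      have h2 := hRe e
      rw [Multiset.countP_add, Multiset.countP_cons, Multiset.map_cons, Multiset.map_cons,
        Multiset.countP_cons, Multiset.countP_cons]
      omega

/-- Cycle double covers of the two sides combine to one of the union, without more cycles. In the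
general case every triangle edge is covered four times by the two covers together, and lies in
both cycles of exactly one matched pair, so that it loses two when that pair is replaced by its
symmetric difference. -/
theorem glue [Finite V] (h : IsTriangleGluing T a b x y z) {S S' : Multiset T.Subgraph}
    (hS : IsCDCOn T a S) (hS' : IsCDCOn T b S') :
    ∃ R, IsCDCOn T (a ∪ b) R ∧ Multiset.card R ≤ Multiset.card S + Multiset.card S' := by
  rcases exists_traceMatching (S.map (trace (triEdges x y z))) (S'.map (trace (triEdges x y z)))
    (fun i => by rw [countP_trace]; exact h.countP_index hS i)
    (fun i => by rw [countP_trace]; exact h.swap.countP_index hS' i) with h7 | h7 | ⟨R, hR⟩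
  · exact h.glue_of_double hS hS' h7
  · obtain ⟨R, hR, hRc⟩ := h.swap.glue_of_double hS' hS h7
    exact ⟨R, by rwa [Set.union_comm], by omega⟩
  · obtain ⟨hR1, hR2, hR3, hR4⟩ := hR
    obtain ⟨Q, hQ1, hQ2, rfl⟩ := exists_pairs_lift hR1 hR2
    have hQ : ∀ r ∈ Q, IsCycleSubgraph r.1 ∧ r.1.verts ⊆ a ∧ IsCycleSubgraph r.2 ∧
        r.2.verts ⊆ b ∧ ∃ i, triEdges x y z i ∈ r.1.edgeSet ∧ triEdges x y z i ∈ r.2.edgeSet := by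
      intro r hr
      have h1 := hS.1 r.1 (Multiset.mem_of_le hQ1 (Multiset.mem_map_of_mem _ hr))
      have h2 := hS'.1 r.2 (Multiset.mem_of_le hQ2 (Multiset.mem_map_of_mem _ hr))
      refine ⟨h1.1, h1.2, h2.1, h2.2, ?_⟩
      obtain ⟨i, hi, hi'⟩ := hR3 _ (Multiset.mem_map_of_mem _ hr)
      exact ⟨i, (hasBit_trace _ _ i).1 hi, (hasBit_trace _ _ i).1 hi'⟩
    have hcnt : ∀ i, Q.countP (fun r => triEdges x y z i ∈ r.1.edgeSet ∧
        triEdges x y z i ∈ r.2.edgeSet) = 1 := by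
      intro i
      rw [← hR4 i, Multiset.countP_map, Multiset.countP_eq_card_filter]
      congr 1
      refine Multiset.filter_congr fun r _ => ?_
      rw [Prod.map_fst, Prod.map_snd, hasBit_trace, hasBit_trace]
    obtain ⟨W, hWc, hW, hWe⟩ := h.exists_swap_all Q hQ
    obtain ⟨S₀, rfl⟩ := Multiset.le_iff_exists_add.1 hQ1
    obtain ⟨S₁, rfl⟩ := Multiset.le_iff_exists_add.1 hQ2
    refine ⟨W + (S₀ + S₁), ⟨?_, ?_⟩, by simp only [Multiset.card_add, Multiset.card_map]; omega⟩
    · intro C hC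
      rcases Multiset.mem_add.1 hC with hC | hC
      · exact hW C hC
      rcases Multiset.mem_add.1 hC with hC | hC
      · have := hS.1 C (Multiset.mem_add.2 (Or.inr hC))
        exact ⟨this.1, this.2.trans Set.subset_union_left⟩
      · have := hS'.1 C (Multiset.mem_add.2 (Or.inr hC))
        exact ⟨this.1, this.2.trans Set.subset_union_right⟩
    · intro u hu v hv huv
      have hsum := hWe s(u, v)
      have hA := hS.2 u
      have hB := hS'.2 u
      have hA0 := hS.countP_eq_zero (u := u) (v := v)
      have hB0 := hS'.countP_eq_zero (u := u) (v := v)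
      have hQ0 : ¬ (u ∈ a ∧ v ∈ a) ∨ ¬ (u ∈ b ∧ v ∈ b) →
          Q.countP (fun r => s(u, v) ∈ r.1.edgeSet ∧ s(u, v) ∈ r.2.edgeSet) = 0 := by
        rintro hn
        rw [Multiset.countP_eq_zero]
        rintro r hr ⟨h1, h2⟩
        obtain ⟨-, ha, -, hb, -⟩ := hQ r hr
        have h1 : r.1.Adj u v := h1
        have h2 : r.2.Adj u v := h2
        rcases hn with hn | hn
        · exact hn ⟨ha (r.1.edge_vert h1), ha (r.1.edge_vert h1.symm)⟩
        · exact hn ⟨hb (r.2.edge_vert h2), hb (r.2.edge_vert h2.symm)⟩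
      simp only [Multiset.countP_add] at hA hB hA0 hB0 ⊢
      by_cases ha : u ∈ a ∧ v ∈ a <;> by_cases hb : u ∈ b ∧ v ∈ b
      · obtain ⟨i, hi⟩ := h.exists_index huv.ne ⟨ha.1, hb.1⟩ ⟨ha.2, hb.2⟩
        have h1 := hA ha.1 v ha.2 huv
        have h2 := hB hb.1 v hb.2 huv
        have h3 := hcnt i
        rw [← hi] at h3
        omega
      · have h1 := hA ha.1 v ha.2 huv
        have h2 := hB0 hb
        have h3 := hQ0 (Or.inr hb)
        omega
      · have h1 := hA0 ha
        have h2 := hB hb.1 v hb.2 huv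
        have h3 := hQ0 (Or.inl ha)
        omega
      · exact absurd (h.same_side hu hv huv) (not_or.2 ⟨ha, hb⟩)

end IsTriangleGluing

/-! ### Covers of the pieces -/

lemma IsCycleSubgraph.map {W V : Type*} {H : SimpleGraph W} {T : SimpleGraph V} (f : H ↪g T)
    {C : H.Subgraph} (hC : IsCycleSubgraph C) : IsCycleSubgraph (C.map f.toHom) := by
  constructor
  · refine Connected.map (G := C.coe)
      (⟨fun v => ⟨f v, Set.mem_image_of_mem _ v.2⟩, fun {a b} h => ⟨a, b, h, rfl, rfl⟩⟩ :
        C.coe →g (C.map f.toHom).coe) ?_ hC.1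
    rintro ⟨_, v, hv, rfl⟩
    exact ⟨⟨v, hv⟩, rfl⟩
  · rintro _ ⟨v, hv, rfl⟩
    have : (C.map f.toHom).neighborSet (f.toHom v) = f '' C.neighborSet v := by
      ext w
      constructor
      · rintro ⟨a, b, hab, ha, rfl⟩
        obtain rfl := f.injective ha
        exact ⟨b, hab, rfl⟩
      · rintro ⟨b, hb, rfl⟩
        exact ⟨v, b, hb, rfl, rfl⟩
    rw [this, Set.ncard_image_of_injective _ f.injective, hC.2 v hv]

lemma IsCDC.map {W V : Type*} {H : SimpleGraph W} {T : SimpleGraph V} (f : H ↪g T)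
    {S : Multiset H.Subgraph} (hS : IsCDC H S) :
    IsCDCOn T (Set.range f) (S.map (Subgraph.map f.toHom)) := by
  constructor
  · intro D hD
    obtain ⟨C, hC, rfl⟩ := Multiset.mem_map.1 hD
    exact ⟨(hS.1 C hC).map f, Set.image_subset_range _ _⟩
  · rintro _ ⟨u, rfl⟩ _ ⟨v, rfl⟩ huv
    rw [Multiset.countP_map, ← hS.2 s(u, v) (f.map_adj_iff.1 huv), Multiset.countP_eq_card_filter]
    congr 1
    refine Multiset.filter_congr fun C _ => ?_
    constructor
    · rintro ⟨a, b, hab, ha, hb⟩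
      obtain rfl := f.injective ha
      obtain rfl := f.injective hb
      exact hab
    · exact fun h => ⟨u, v, h, rfl, rfl⟩

lemma exists_four_cycle {V : Type*} {T : SimpleGraph V} {a b c d : V} (hab : T.Adj a b)
    (hbc : T.Adj b c) (hcd : T.Adj c d) (hda : T.Adj d a) (hac : a ≠ c) (hbd : b ≠ d) :
    ∃ C : T.Subgraph, IsCycleSubgraph C ∧
      ∀ e, e ∈ C.edgeSet ↔ e = s(a, b) ∨ e = s(b, c) ∨ e = s(c, d) ∨ e = s(d, a) := by
  refine ⟨_, isCycleSubgraph_toSubgraph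
    (p := Walk.cons hab (.cons hbc (.cons hcd (.cons hda .nil)))) ?_, ?_⟩
  · rw [Walk.cons_isCycle_iff]
    have := hab.ne
    have := hbc.ne
    have := hcd.ne
    have := hda.ne
    simp
    grind
  · intro e
    rw [Walk.mem_edges_toSubgraph]
    simp

/-- The three Hamiltonian cycles of `K₄` form a cycle double cover. -/
lemma exists_cdc_K4 : ∃ S : Multiset (completeGraph (Fin 4)).Subgraph,
    IsCDC (completeGraph (Fin 4)) S ∧ Multiset.card S = 3 := by
  have adj : ∀ i j : Fin 4, i ≠ j → (completeGraph (Fin 4)).Adj i j := fun i j h => h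
  obtain ⟨C₁, h₁, e₁⟩ := exists_four_cycle (adj 0 1 (by decide)) (adj 1 2 (by decide))
    (adj 2 3 (by decide)) (adj 3 0 (by decide)) (by decide) (by decide)
  obtain ⟨C₂, h₂, e₂⟩ := exists_four_cycle (adj 0 2 (by decide)) (adj 2 1 (by decide))
    (adj 1 3 (by decide)) (adj 3 0 (by decide)) (by decide) (by decide)
  obtain ⟨C₃, h₃, e₃⟩ := exists_four_cycle (adj 0 1 (by decide)) (adj 1 3 (by decide))
    (adj 3 2 (by decide)) (adj 2 0 (by decide)) (by decide) (by decide)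
  refine ⟨C₁ ::ₘ C₂ ::ₘ C₃ ::ₘ 0, ⟨?_, ?_⟩, rfl⟩
  · intro C hC
    simp only [Multiset.mem_cons, Multiset.notMem_zero, or_false] at hC
    rcases hC with rfl | rfl | rfl <;> assumption
  · intro e he
    simp only [Multiset.countP_cons, Multiset.countP_zero, e₁, e₂, e₃]
    induction e using Sym2.ind with
    | _ i j =>
      have hij : i ≠ j := he
      clear he
      fin_cases i <;> fin_cases j <;> first | exact absurd rfl hij | simp

lemma HasSepTriangle.of_iso {U W : Type*} {G : SimpleGraph U} {H : SimpleGraph W} (φ : G ≃g H)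
    (h : HasSepTriangle H) : HasSepTriangle G := by
  obtain ⟨u, v, w, huv, hvw, huw, hn⟩ := h
  refine ⟨φ.symm u, φ.symm v, φ.symm w, φ.symm.map_adj_iff.2 huv, φ.symm.map_adj_iff.2 hvw,
    φ.symm.map_adj_iff.2 huw, fun hc => hn ?_⟩
  refine Connected.map (⟨fun x => ⟨φ x.1, ?_⟩, fun {a b} h => φ.map_adj_iff.2 h⟩ :
    G.induce _ →g H.induce _) ?_ hc
  · obtain ⟨x, h1, h2, h3⟩ := x
    refine ⟨fun h => h1 ?_, fun h => h2 ?_, fun h => h3 ?_⟩ <;> rw [← h] <;> simp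
  · rintro ⟨x, h1, h2, h3⟩
    refine ⟨⟨φ.symm x, ?_⟩, Subtype.ext (φ.apply_symm_apply x)⟩
    exact ⟨fun h => h1 (φ.symm.injective h), fun h => h2 (φ.symm.injective h),
      fun h => h3 (φ.symm.injective h)⟩

lemma eq_top_of_edgeSet_ncard {V : Type*} [Fintype V] {G : SimpleGraph V}
    (h : (Fintype.card V).choose 2 ≤ G.edgeSet.ncard) : G = ⊤ := by
  rw [← coe_edgeFinset, Set.ncard_coe_finset, ← card_edgeFinset_top_eq_card_choose_two] at h
  have := Finset.eq_of_subset_of_card_le (edgeFinset_mono (le_top : G ≤ ⊤)) h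
  exact edgeFinset_inj.1 this

/-- A piece without separating triangle is `K₄`, with a cover by three cycles, or a `4`-connected
triangulation, to which the assumed bound applies. -/
lemma exists_cdc_piece
    (hyp : ∀ (W : Type) [Fintype W] (G : SimpleGraph W),
      IsTriangulation G → IsKConnected 4 G →
        ∃ S : Multiset G.Subgraph, IsCDC G S ∧ Multiset.card S + 2 ≤ Fintype.card W)
    {V : Type*} [Fintype V] {T : SimpleGraph V} (hT : IsPlanar T) (s : Finset V)
    (h3 : 3 ≤ s.card) (he : ec T s + 6 = 3 * s.card)
    (hsep : ¬ HasSepTriangle (T.induce (s : Set V))) :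
    ∃ S, IsCDCOn T s S ∧
      ((Nonempty (T.induce (s : Set V) ≃g completeGraph (Fin 4)) ∧ Multiset.card S ≤ 3) ∨
        (IsKConnected 4 (T.induce (s : Set V)) ∧ Multiset.card S ≤ s.card - 2)) := by
  have hcard : Fintype.card (s : Set V) = s.card := by simp
  rw [← edgeSet_induce_ncard] at he
  -- a cover of an isomorphic copy of the piece can be carried back
  have back : ∀ {W : Type} {H : SimpleGraph W} (φ : T.induce (s : Set V) ≃g H)
      {S : Multiset H.Subgraph}, IsCDC H S →
      ∃ S', IsCDCOn T s S' ∧ Multiset.card S' = Multiset.card S := by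
    intro W H φ S hS
    have := hS.map ((Embedding.induce (G := T) (s : Set V)).comp φ.symm.toEmbedding)
    have hr : Set.range ((Embedding.induce (G := T) (s : Set V)).comp φ.symm.toEmbedding) =
        (s : Set V) := by
      ext v
      constructor
      · rintro ⟨w, rfl⟩
        exact (φ.symm w).2
      · intro hv
        exact ⟨φ ⟨v, hv⟩, by simp⟩
    rw [hr] at this
    exact ⟨_, this, Multiset.card_map _ _⟩
  rcases Nat.lt_or_ge s.card 5 with hlt | h5
  · have htop : T.induce (s : Set V) = ⊤ := by
      apply eq_top_of_edgeSet_ncard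
      rw [hcard]
      interval_cases s.card <;> simp [Nat.choose] <;> omega
    obtain h | h : s.card = 3 ∨ s.card = 4 := by omega
    · exfalso
      apply hsep
      obtain ⟨x, y, z, hxy, hxz, hyz, rfl⟩ := Finset.card_eq_three.1 h
      refine ⟨⟨x, by simp⟩, ⟨y, by simp⟩, ⟨z, by simp⟩, ?_, ?_, ?_, ?_⟩
      · rw [htop]; simpa using hxy
      · rw [htop]; simpa using hyz
      · rw [htop]; simpa using hxz
      · intro hc
        obtain ⟨⟨v, hv⟩, h1, h2, h3⟩ := hc.nonempty
        simp at hv h1 h2 h3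
        tauto
    · have φ : T.induce (s : Set V) ≃g completeGraph (Fin 4) := by
        rw [htop]
        exact Iso.completeGraph (Fintype.equivFinOfCardEq (hcard.trans h))
      obtain ⟨S, hS, hc⟩ := exists_cdc_K4
      obtain ⟨S', hS', hc'⟩ := back φ hS
      exact ⟨S', hS', Or.inl ⟨⟨φ⟩, by omega⟩⟩
  · have φ := (T.induce (s : Set V)).overFinIso hcard
    set H := (T.induce (s : Set V)).overFin hcard
    have hHe : H.edgeSet.ncard + 6 = 3 * Fintype.card (Fin s.card) := by
      rw [Fintype.card_fin, ← he, ← Nat.card_coe_set_eq, ← Nat.card_coe_set_eq,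
        Nat.card_congr φ.mapEdgeSet]
    have hHp : IsPlanar H := (hT.of_minor (hasGraphMinor_induce T s)).of_minor
      (.of_injective φ.symm φ.symm.injective fun a b h => φ.symm.map_adj_iff.2 h)
    have hH : IsKConnected 4 H := isKConnected_four H hHp.1 (by simpa using h5) hHe
      fun h => hsep (h.of_iso φ)
    obtain ⟨S, hS, hc⟩ := hyp _ H ⟨hHp, by simpa using h3, hHe⟩ hH
    rw [Fintype.card_fin] at hc
    obtain ⟨S', hS', hc'⟩ := back φ hS
    refine ⟨S', hS', Or.inr ⟨?_, by omega⟩⟩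
    exact isKConnected_four _ (hT.of_minor (hasGraphMinor_induce T s)).1 (by rwa [hcard])
      (by rw [he, hcard]) hsep

/-! ### Induction over the decomposition -/

/-- Both parts of a split of a triangulated set along a triangle are again triangulated: the edge
bound for both parts adds up to an equality. -/
lemma ec_split {V : Type*} [Fintype V] {T : SimpleGraph V} (hT : IsPlanar T) {a b : Finset V}
    (ha : a ≠ a ∪ b) (hb : b ≠ a ∪ b) (h3 : (a ∩ b).card = 3)
    (hclique : ∀ u ∈ a ∩ b, ∀ v ∈ a ∩ b, u ≠ v → T.Adj u v)
    (hcross : ∀ u ∈ a, ∀ v ∈ b, T.Adj u v → u ∈ b ∨ v ∈ a)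
    (he : ec T ((a ∪ b : Finset V) : Set V) + 6 = 3 * (a ∪ b).card) :
    (3 ≤ a.card ∧ ec T a + 6 = 3 * a.card) ∧ (3 ≤ b.card ∧ ec T b + 6 = 3 * b.card) := by
  have ha3 : 3 ≤ a.card := h3 ▸ Finset.card_le_card Finset.inter_subset_left
  have hb3 : 3 ≤ b.card := h3 ▸ Finset.card_le_card Finset.inter_subset_right
  have h1 := ec_union T (A := (a : Set V)) (B := (b : Set V)) hcross
  have h2 : 3 ≤ ec T ((a : Set V) ∩ b) := by
    rw [← Finset.coe_inter]
    obtain ⟨x, y, z, hxy, hxz, hyz, hi⟩ := Finset.card_eq_three.1 h3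
    rw [hi] at hclique ⊢
    have := le_ec_triple T hxy hyz hxz
    rw [if_pos (hclique x (by simp) y (by simp) hxy), if_pos (hclique y (by simp) z (by simp) hyz),
      if_pos (hclique x (by simp) z (by simp) hxz)] at this
    simpa using this
  have h2' : ec T ((a : Set V) ∩ b) ≤ 3 := by
    have := ec_le_choose T ((a : Set V) ∩ b)
    rwa [← Finset.coe_inter, Set.ncard_coe_finset, h3, Finset.coe_inter] at this
  have h4 := NoK5.ec_bound (hT.of_minor (hasGraphMinor_induce T a)).1 (by simpa using ha3)
  have h5 := NoK5.ec_bound (hT.of_minor (hasGraphMinor_induce T b)).1 (by simpa using hb3)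
  have h6 := Finset.card_union_add_card_inter a b
  rw [Set.ncard_coe_finset] at h4 h5
  rw [Finset.coe_union] at he
  omega

/-- The bound of the theorem, for one multiset of pieces. -/
noncomputable def pieceBound {V : Type*} [Fintype V] (T : SimpleGraph V)
    (P : Multiset (Finset V)) : ℕ∞ :=
  ((3 * P.countP (fun s : Finset V =>
      Nonempty ((T.induce (s : Set V)) ≃g completeGraph (Fin 4))) : ℕ) : ℕ∞) +
    ((P.filter (fun s : Finset V => IsKConnected 4 (T.induce (s : Set V)))).map
      (fun s : Finset V => ((Finset.card s - 2 : ℕ) : ℕ∞))).sum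

lemma pieceBound_add {V : Type*} [Fintype V] (T : SimpleGraph V) (P Q : Multiset (Finset V)) :
    pieceBound T (P + Q) = pieceBound T P + pieceBound T Q := by
  simp only [pieceBound, Multiset.countP_add, Multiset.filter_add, Multiset.map_add,
    Multiset.sum_add, Nat.mul_add, Nat.cast_add]
  exact add_add_add_comm _ _ _ _

/-- The covers of the pieces are glued in the order of the decomposition tree. -/
theorem exists_cdc_of_decomp
    (hyp : ∀ (W : Type) [Fintype W] (G : SimpleGraph W),
      IsTriangulation G → IsKConnected 4 G →
        ∃ S : Multiset G.Subgraph, IsCDC G S ∧ Multiset.card S + 2 ≤ Fintype.card W)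
    {V : Type*} [Fintype V] {T : SimpleGraph V} (hT : IsPlanar T) {s : Finset V}
    {P : Multiset (Finset V)} (hP : IsPieceDecomp T s P) :
    3 ≤ s.card → ec T s + 6 = 3 * s.card →
      ∃ S, IsCDCOn T s S ∧ (Multiset.card S : ℕ∞) ≤ pieceBound T P := by
  induction hP with
  | base s hsep =>
    intro h3 he
    obtain ⟨S, hS, hc⟩ := exists_cdc_piece hyp hT s h3 he hsep
    refine ⟨S, hS, ?_⟩
    rw [pieceBound, ← Multiset.cons_zero, Multiset.countP_cons]
    rcases hc with ⟨hK, hc⟩ | ⟨hK, hc⟩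
    · rw [if_pos hK]
      refine le_add_right ?_
      exact_mod_cast hc
    · rw [Multiset.filter_cons_of_pos
        (p := fun s : Finset V => IsKConnected 4 (T.induce (s : Set V))) _ hK, Multiset.map_cons, Multiset.sum_cons]
      refine le_add_left (le_add_right ?_)
      exact_mod_cast hc
  | split s a b P Q hs ha hb h3 hclique hcross _ _ ihP ihQ =>
    subst hs
    intro _ he
    obtain ⟨⟨ha3, hea⟩, hb3, heb⟩ := ec_split hT ha hb h3 hclique hcross he
    obtain ⟨S, hS, hSc⟩ := ihP ha3 hea
    obtain ⟨S', hS', hSc'⟩ := ihQ hb3 heb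
    obtain ⟨x, y, z, hxy, hxz, hyz, hi⟩ := Finset.card_eq_three.1 h3
    rw [hi] at hclique
    have hglue : IsTriangleGluing T (a : Set V) (b : Set V) x y z :=
      { inter := by rw [← Finset.coe_inter, hi]; simp
        xy := hclique x (by simp) y (by simp) hxy
        yz := hclique y (by simp) z (by simp) hyz
        xz := hclique x (by simp) z (by simp) hxz
        cross := hcross }
    obtain ⟨R, hR, hRc⟩ := hglue.glue hS hS'
    refine ⟨R, by rwa [Finset.coe_union], ?_⟩
    rw [pieceBound_add]
    calc (Multiset.card R : ℕ∞) ≤ (Multiset.card S : ℕ∞) + Multiset.card S' := by exact_mod_cast hRc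
      _ ≤ _ := add_le_add hSc hSc'

/-- Assuming every planar 4-connected triangulation on `m` vertices has a CDC of size at
most `m - 2`, every plane triangulation `T` satisfies
`c(T) ≤ 3·|𝒫_{K₄}(T)| + Σ_{G ∈ 𝒫₄(T)} (|V(G)| - 2)`, where `𝒫_{K₄}(T)` are the pieces
isomorphic to `K₄` and `𝒫₄(T)` the 4-connected pieces. -/
theorem statement_12
    (hyp : ∀ (W : Type) [Fintype W] (G : SimpleGraph W),
      IsTriangulation G → IsKConnected 4 G →
        ∃ S : Multiset G.Subgraph, IsCDC G S ∧
          Multiset.card S + 2 ≤ Fintype.card W)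
    {V : Type*} [Fintype V] (T : SimpleGraph V)
    (hT : IsTriangulation T)
    (P : Multiset (Finset V)) (hP : IsPieceDecomp T Finset.univ P) :
    cdcMin T ≤
      ((3 * P.countP (fun s : Finset V =>
            Nonempty ((T.induce (s : Set V)) ≃g completeGraph (Fin 4))) : ℕ) : ℕ∞) +
      ((P.filter (fun s : Finset V => IsKConnected 4 (T.induce (s : Set V)))).map
          (fun s : Finset V => ((Finset.card s - 2 : ℕ) : ℕ∞))).sum := by
  obtain ⟨hpl, h3, he⟩ := hT
  obtain ⟨S, hS, hc⟩ := exists_cdc_of_decomp hyp hpl hP (by simpa using h3)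
    (by rwa [Finset.coe_univ, ec_univ, Finset.card_univ])
  refine le_trans (sInf_le ⟨S, ⟨fun C hC => (hS.1 C hC).1, fun e he => ?_⟩, rfl⟩) hc
  induction e using Sym2.ind with
  | _ u v => exact hS.2 u (by simp) v (by simp) he
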